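/- arXiv:2508.04518 — 3 statements merged into one kernel-verified Lean document; each statement's English description precedes it below -/
import Mathlib

section
/- Let a ≤ 0 and b ≥ 0 be real numbers, at least one of which is nonzero. Let G be a connected simple graph with n vertices and chromatic number χ, where 2 ≤ χ ≤ n. Then Gut_{a,b}(G) ≥ Gut_{a,b}(K_{n1,n2,…,nχ}), where K_{n1,n2,…,nχ} is the complete χ-partite graph on n vertices whose part sizes satisfy |n_i − n_j| ≤ 1 for all 1 ≤ i < j ≤ χ and n1 + n2 + ⋯ + nχ = n. Equality holds if and only if G is isomorphic to this complete χ-partite graph K_{n1,n2,…,nχ}. -/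
open scoped Classical

/-- The general Gutman index `Gut_{a,b}(G)`: the sum, over all unordered pairs of
distinct vertices `{u, v}`, of `(d(u)·d(v))^a · (dist(u,v))^b` (real powers). -/
noncomputable def gut {V : Type*} [Fintype V] (G : SimpleGraph V) (a b : ℝ) : ℝ :=
  ∑ e ∈ Finset.univ.filter (fun e : Sym2 V => ¬ e.IsDiag),
    Sym2.lift ⟨fun u v =>
      ((G.degree u : ℝ) * (G.degree v : ℝ)) ^ a * ((G.dist u v : ℝ)) ^ b,
      fun u v => by
        show ((G.degree u : ℝ) * (G.degree v : ℝ)) ^ a * ((G.dist u v : ℝ)) ^ b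
            = ((G.degree v : ℝ) * (G.degree u : ℝ)) ^ a * ((G.dist v u : ℝ)) ^ b
        rw [mul_comm ((G.degree u : ℝ)), SimpleGraph.dist_comm]⟩ e

/-! Adding an edge to a connected graph raises degrees and lowers distances, so it strictly lowers
the index; hence `G` may be replaced by the complete multipartite graph on the classes of a
colouring. For part sizes `q i`, distances are `1` or `2` and a vertex of part `i` has degree
`n - q i`, so everything depends on the weights `(n - q i) ^ a`. Moving a vertex from a part of size
`x + 1` to one of size `y < x` strictly lowers the index: the weights `c`, `d` of the two parts
become `c'`, `d'` with `d ≤ d' ≤ c' ≤ c` and `c' * d' ≤ c * d`, so matching each vertex of the small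
part with an unmoved vertex of the large one lowers the sum and the product of weights in every
matched pair, while all remaining weights only decrease. A minimiser therefore has part sizes
differing by at most one, which determines them up to a permutation.
-/

section Sym2

variable {V M : Type*} [Fintype V] [AddCommMonoid M]

lemma sum_offDiag_sym2Mk (f : Sym2 V → M) :
    ∑ x ∈ (Finset.univ : Finset V).offDiag, f s(x.1, x.2) =
      2 • ∑ e ∈ Finset.univ.filter (fun e : Sym2 V => ¬ e.IsDiag), f e := by
  have maps_to : ∀ x ∈ (Finset.univ : Finset V).offDiag,
      s(x.1, x.2) ∈ Finset.univ.filter (fun e : Sym2 V => ¬ e.IsDiag) := by simp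
  rw [← Finset.sum_fiberwise_of_maps_to maps_to, Finset.smul_sum]
  refine Finset.sum_congr rfl fun e he => ?_
  induction e using Sym2.ind with
  | _ u v =>
    have huv : u ≠ v := by simpa using he
    have fiber : (Finset.univ : Finset V).offDiag.filter (fun x => s(x.1, x.2) = s(u, v)) =
        {(u, v), (v, u)} := by
      ext ⟨x, y⟩
      simp only [Finset.mem_filter, Finset.mem_offDiag, Finset.mem_univ, true_and, Sym2.eq_iff,
        Finset.mem_insert, Finset.mem_singleton, Prod.mk.injEq]
      grind
    rw [fiber, Finset.sum_pair (by simp [huv]), Sym2.eq_swap (a := v), two_nsmul]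

end Sym2

section GutmanIndex

variable {V W : Type*}

lemma dist_map_iso {G : SimpleGraph V} {H : SimpleGraph W} (e : G ≃g H) (u v : V) :
    H.dist (e u) (e v) = G.dist u v := by
  have range_eq : Set.range (SimpleGraph.Walk.length : H.Walk (e u) (e v) → ℕ) =
      Set.range (SimpleGraph.Walk.length : G.Walk u v → ℕ) := by
    ext k
    constructor
    · rintro ⟨w, rfl⟩
      exact ⟨(w.map e.symm.toHom).copy (e.symm_apply_apply u) (e.symm_apply_apply v), by simp⟩
    · rintro ⟨w, rfl⟩
      exact ⟨w.map e.toHom, w.length_map _⟩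
  rw [SimpleGraph.dist_eq_sInf, SimpleGraph.dist_eq_sInf, range_eq]

variable [Fintype V] [Fintype W]

/-- The contribution of the pair `{u, v}` to the general Gutman index. -/
noncomputable def gutTerm (G : SimpleGraph V) (a b : ℝ) (u v : V) : ℝ :=
  ((G.degree u : ℝ) * (G.degree v : ℝ)) ^ a * (G.dist u v : ℝ) ^ b

lemma two_mul_gut (G : SimpleGraph V) (a b : ℝ) :
    2 * gut G a b = ∑ x ∈ (Finset.univ : Finset V).offDiag, gutTerm G a b x.1 x.2 := by
  rw [gut, ← Nat.cast_two, ← nsmul_eq_mul, ← sum_offDiag_sym2Mk]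
  rfl

lemma gut_congr {G : SimpleGraph V} {H : SimpleGraph W} (e : G ≃g H) (a b : ℝ) :
    gut G a b = gut H a b := by
  have term_eq (u v : V) : gutTerm G a b u v = gutTerm H a b (e u) (e v) := by
    rw [gutTerm, gutTerm, dist_map_iso, e.degree_eq, e.degree_eq]
  have two_mul_eq : 2 * gut G a b = 2 * gut H a b := by
    rw [two_mul_gut, two_mul_gut]
    exact Finset.sum_equiv (e.toEquiv.prodCongr e.toEquiv) (by simp) fun x _ => term_eq x.1 x.2
  exact mul_left_cancel₀ two_ne_zero two_mul_eq

variable {G H : SimpleGraph V} {a b : ℝ}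

lemma degree_lt_degree_of_adj_of_not_adj (hGH : G ≤ H) {u v : V} (hH : H.Adj u v)
    (hG : ¬ G.Adj u v) : G.degree u < H.degree u := by
  have subset : G.neighborFinset u ⊆ H.neighborFinset u := fun w hw => by
    simpa using hGH (by simpa using hw)
  exact Finset.card_lt_card <|
    (Finset.ssubset_iff_of_subset subset).2 ⟨v, by simpa using hH, by simpa using hG⟩

lemma gutTerm_anti (hG : G.Connected) (hGH : G ≤ H) (ha : a ≤ 0) (hb : 0 ≤ b) {u v : V}
    (huv : u ≠ v) : gutTerm H a b u v ≤ gutTerm G a b u v := by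
  have : Nontrivial V := ⟨u, v, huv⟩
  have degree_pos (w : V) : 0 < G.degree w := hG.preconnected.degree_pos_of_nontrivial w
  have degree_le (w : V) : G.degree w ≤ H.degree w := SimpleGraph.degree_le_of_le hGH
  have dist_le : H.dist u v ≤ G.dist u v := (hG.preconnected u v).dist_anti hGH
  have degree_mul_pos : (0 : ℝ) < G.degree u * G.degree v :=
    mul_pos (mod_cast degree_pos u) (mod_cast degree_pos v)
  refine mul_le_mul (Real.rpow_le_rpow_of_nonpos degree_mul_pos ?_ ha)
    (Real.rpow_le_rpow (by positivity) (mod_cast dist_le) hb) (by positivity) (by positivity)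
  gcongr <;> exact degree_le _

lemma gutTerm_lt_of_adj_of_not_adj (hG : G.Connected) (hGH : G ≤ H) (ha : a ≤ 0) (hb : 0 ≤ b)
    (hab : a ≠ 0 ∨ b ≠ 0) {u v : V} (hHuv : H.Adj u v) (hGuv : ¬ G.Adj u v) :
    gutTerm H a b u v < gutTerm G a b u v := by
  have : Nontrivial V := ⟨u, v, hHuv.ne⟩
  have degree_pos (w : V) : (0 : ℝ) < G.degree w :=
    mod_cast hG.preconnected.degree_pos_of_nontrivial w
  have degree_mul_pos : (0 : ℝ) < G.degree u * G.degree v := mul_pos (degree_pos u) (degree_pos v)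
  have degree_lt : (G.degree u : ℝ) < H.degree u :=
    mod_cast degree_lt_degree_of_adj_of_not_adj hGH hHuv hGuv
  have degree_le : (G.degree v : ℝ) ≤ H.degree v := mod_cast SimpleGraph.degree_le_of_le hGH
  have degree_mul_lt : (G.degree u : ℝ) * G.degree v < H.degree u * H.degree v :=
    mul_lt_mul degree_lt degree_le (degree_pos v) (by positivity)
  have one_lt_dist : (1 : ℝ) < G.dist u v := mod_cast hG.one_lt_dist_of_ne_of_not_adj hHuv.ne hGuv
  rw [gutTerm, gutTerm, SimpleGraph.dist_eq_one_iff_adj.2 hHuv, Nat.cast_one, Real.one_rpow]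
  rcases hab with ha₀ | hb₀
  · exact mul_lt_mul (Real.rpow_lt_rpow_of_neg degree_mul_pos degree_mul_lt (ha.lt_of_ne ha₀))
      (Real.one_le_rpow one_lt_dist.le hb) one_pos (by positivity)
  · exact mul_lt_mul' (Real.rpow_le_rpow_of_nonpos degree_mul_pos degree_mul_lt.le ha)
      (Real.one_lt_rpow one_lt_dist (hb.lt_of_ne' hb₀)) one_pos.le
      (Real.rpow_pos_of_pos degree_mul_pos a)

theorem gut_strictAnti (hG : G.Connected) (hGH : G < H) (ha : a ≤ 0) (hb : 0 ≤ b)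
    (hab : a ≠ 0 ∨ b ≠ 0) : gut H a b < gut G a b := by
  obtain ⟨u, v, hHuv, hGuv⟩ : ∃ u v, H.Adj u v ∧ ¬ G.Adj u v := by
    simpa [SimpleGraph.le_iff_adj] using hGH.not_ge
  refine lt_of_mul_lt_mul_left ?_ zero_le_two
  rw [two_mul_gut, two_mul_gut]
  exact Finset.sum_lt_sum
    (fun x hx => gutTerm_anti hG hGH.le ha hb (Finset.mem_offDiag.1 hx).2.2)
    ⟨(u, v), by simpa using hHuv.ne, gutTerm_lt_of_adj_of_not_adj hG hGH.le ha hb hab hHuv hGuv⟩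

end GutmanIndex

section CompleteMultipartite

open SimpleGraph (completeMultipartiteGraph)

lemma nonempty_iso_comap_top {V W ι κ : Type*} [Fintype V] [Fintype W] {f : V → ι} {g : W → κ}
    (σ : ι ≃ κ) (h : ∀ i, Fintype.card {v // f v = i} = Fintype.card {w // g w = σ i}) :
    Nonempty ((⊤ : SimpleGraph ι).comap f ≃g (⊤ : SimpleGraph κ).comap g) := by
  let e : V ≃ W := (Equiv.sigmaFiberEquiv f).symm.trans <|
    (Equiv.sigmaCongr σ fun i => Fintype.equivOfCardEq (h i)).trans (Equiv.sigmaFiberEquiv g)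
  have he (v : V) : g (e v) = σ (f v) := (Fintype.equivOfCardEq (h (f v)) ⟨v, rfl⟩).2
  exact ⟨⟨e, by simp [he]⟩⟩

variable {ι : Type*} {V : ι → Type*}

lemma dist_completeMultipartiteGraph_of_fst_eq [Nontrivial ι] [∀ i, Nonempty (V i)]
    {u v : Σ i, V i} (huv : u ≠ v) (h : u.1 = v.1) :
    (completeMultipartiteGraph V).dist u v = 2 := by
  obtain ⟨j, hj⟩ := exists_ne u.1
  have edist_eq : (completeMultipartiteGraph V).edist u v = 2 :=
    SimpleGraph.edist_eq_two_iff.2 ⟨huv, by simpa using h, ⟨j, Classical.arbitrary _⟩,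
      by simpa [SimpleGraph.mem_commonNeighbors, ← h] using hj.symm⟩
  rw [SimpleGraph.dist, edist_eq]
  rfl

variable [Fintype ι] [∀ i, Fintype (V i)]

lemma card_subtype_sigma_fst_eq (i : ι) :
    Fintype.card {u : Σ i, V i // u.1 = i} = Fintype.card (V i) :=
  Fintype.card_congr (Equiv.sigmaSubtype i)

lemma degree_completeMultipartiteGraph_add_card (u : Σ i, V i)
    [Fintype ((completeMultipartiteGraph V).neighborSet u)] :
    (completeMultipartiteGraph V).degree u + Fintype.card (V u.1) =
      Fintype.card (Σ i, V i) := by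
  have neighborFinset_eq : (completeMultipartiteGraph V).neighborFinset u =
      (Finset.univ.filter fun v : Σ i, V i => v.1 = u.1)ᶜ := by
    ext v
    simp [eq_comm]
  rw [← card_subtype_sigma_fst_eq u.1, Fintype.card_subtype,
    ← SimpleGraph.card_neighborFinset_eq_degree, neighborFinset_eq, Finset.card_compl_add_card]

end CompleteMultipartite

section SigmaSums

variable {ι R : Type*} [Fintype ι] [CommRing R] {V : ι → Type*} [∀ i, Fintype (V i)]

lemma sum_sigma_comp_fst (f : ι → R) :
    ∑ u : Σ i, V i, f u.1 = ∑ i, Fintype.card (V i) * f i := by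
  simp only [Fintype.sum_sigma, Finset.sum_const, Finset.card_univ, nsmul_eq_mul]

lemma sum_sigma_mul_comp_fst (w : ι → R) :
    ∑ x : (Σ i, V i) × (Σ i, V i), w x.1.1 * w x.2.1 = (∑ i, Fintype.card (V i) * w i) ^ 2 := by
  rw [← sum_sigma_comp_fst, sq, Fintype.sum_mul_sum, Fintype.sum_prod_type]

lemma sum_sigma_ite_fst_eq_fst (w : ι → R) :
    ∑ x : (Σ i, V i) × (Σ i, V i), (if x.1.1 = x.2.1 then w x.1.1 * w x.2.1 else 0) =
      ∑ i, (Fintype.card (V i) * w i) ^ 2 := by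
  have inner (u : Σ i, V i) : ∑ v : Σ i, V i, (if u.1 = v.1 then w u.1 * w v.1 else 0) =
      Fintype.card (V u.1) * w u.1 ^ 2 := by
    rw [sum_sigma_comp_fst fun j => if u.1 = j then w u.1 * w j else 0]
    simp only [mul_ite, mul_zero, Finset.sum_ite_eq, Finset.mem_univ, if_true, sq]
  rw [Fintype.sum_prod_type]
  simp only [inner, sum_sigma_comp_fst fun i => (Fintype.card (V i) : R) * w i ^ 2]
  exact Finset.sum_congr rfl fun i _ => by ring

lemma sum_offDiag_sigma (w : ι → R) (B : R) :
    ∑ x ∈ (Finset.univ : Finset (Σ i, V i)).offDiag,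
      (if x.1.1 = x.2.1 then B else 1) * (w x.1.1 * w x.2.1) =
      (∑ i, Fintype.card (V i) * w i) ^ 2 - ∑ i, Fintype.card (V i) * w i ^ 2 +
        (B - 1) * ∑ i, Fintype.card (V i) * (Fintype.card (V i) - 1) * w i ^ 2 := by
  set term : (Σ i, V i) × (Σ i, V i) → R := fun x =>
    (if x.1.1 = x.2.1 then B else 1) * (w x.1.1 * w x.2.1) with hterm
  have sum_univ : ∑ x, term x =
      (∑ i, Fintype.card (V i) * w i) ^ 2 + (B - 1) * ∑ i, (Fintype.card (V i) * w i) ^ 2 := by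
    rw [← sum_sigma_mul_comp_fst, ← sum_sigma_ite_fst_eq_fst, Finset.mul_sum,
      ← Finset.sum_add_distrib]
    refine Finset.sum_congr rfl fun x _ => ?_
    simp only [hterm]
    split_ifs <;> ring
  have sum_diag : ∑ x ∈ (Finset.univ : Finset (Σ i, V i)).diag, term x =
      B * ∑ i, Fintype.card (V i) * w i ^ 2 := by
    simp only [Finset.sum_diag, hterm, if_true, ← sq, ← Finset.mul_sum,
      sum_sigma_comp_fst (w · ^ 2)]
  have sum_offDiag : ∑ x ∈ (Finset.univ : Finset (Σ i, V i)).offDiag, term x =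
      ∑ x, term x - ∑ x ∈ (Finset.univ : Finset (Σ i, V i)).diag, term x := by
    rw [eq_sub_iff_add_eq', ← Finset.sum_union (Finset.disjoint_diag_offDiag _),
      Finset.diag_union_offDiag, Finset.univ_product_univ]
  have sum_card_mul_sub_one : ∑ i, (Fintype.card (V i) : R) * (Fintype.card (V i) - 1) * w i ^ 2 =
      ∑ i, (Fintype.card (V i) * w i) ^ 2 - ∑ i, Fintype.card (V i) * w i ^ 2 := by
    rw [← Finset.sum_sub_distrib]
    exact Finset.sum_congr rfl fun i _ => by ring
  rw [sum_offDiag, sum_univ, sum_diag, sum_card_mul_sub_one]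
  ring

end SigmaSums

section MultipartiteGut

variable {ι : Type*} [Fintype ι]

/-- Twice the sum of `w v * w v'` over the pairs of distinct vertices `v`, `v'` of a set partitioned
into parts of sizes `q i`, where each vertex of part `i` has weight `w (q i)` and pairs inside one
part are counted with multiplicity `B`. For `w m = (n - m) ^ a` and `B = 2 ^ b` this is twice the
general Gutman index of the complete multipartite graph. -/
noncomputable def partPairSum (w : ℕ → ℝ) (B : ℝ) (q : ι → ℕ) : ℝ :=
  (∑ i, q i * w (q i)) ^ 2 - ∑ i, q i * w (q i) ^ 2 + (B - 1) * ∑ i, q i * (q i - 1) * w (q i) ^ 2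

variable [Nontrivial ι]

lemma gutTerm_completeMultipartiteGraph {V : ι → Type*} [∀ i, Fintype (V i)] [∀ i, Nonempty (V i)]
    (a b : ℝ) {u v : Σ i, V i} (huv : u ≠ v) :
    gutTerm (SimpleGraph.completeMultipartiteGraph V) a b u v =
      (if u.1 = v.1 then 2 ^ b else 1) *
        (((Fintype.card (Σ i, V i) : ℝ) - Fintype.card (V u.1)) ^ a *
          ((Fintype.card (Σ i, V i) : ℝ) - Fintype.card (V v.1)) ^ a) := by
  have degree_eq (u : Σ i, V i)
      [Fintype ((SimpleGraph.completeMultipartiteGraph V).neighborSet u)] :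
      ((SimpleGraph.completeMultipartiteGraph V).degree u : ℝ) =
        Fintype.card (Σ i, V i) - Fintype.card (V u.1) := by
    rw [eq_sub_iff_add_eq]
    exact_mod_cast degree_completeMultipartiteGraph_add_card u
  rw [gutTerm, Real.mul_rpow (Nat.cast_nonneg _) (Nat.cast_nonneg _), degree_eq, degree_eq,
    mul_comm]
  split_ifs with h
  · rw [dist_completeMultipartiteGraph_of_fst_eq huv h, Nat.cast_two]
  · rw [SimpleGraph.dist_eq_one_iff_adj.2 (by simpa using h), Nat.cast_one, Real.one_rpow]

lemma two_mul_gut_completeMultipartiteGraph (a b : ℝ) {q : ι → ℕ} (hq : ∀ i, 0 < q i) :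
    2 * gut (SimpleGraph.completeMultipartiteGraph fun i => Fin (q i)) a b =
      partPairSum (fun m => ((∑ i, q i : ℕ) - m : ℝ) ^ a) (2 ^ b) q := by
  have (i : ι) : Nonempty (Fin (q i)) := Fin.pos_iff_nonempty.1 (hq i)
  rw [two_mul_gut, Finset.sum_congr rfl fun x hx =>
    gutTerm_completeMultipartiteGraph a b (Finset.mem_offDiag.1 hx).2.2]
  simpa only [partPairSum, Fintype.card_sigma, Fintype.card_fin] using
    sum_offDiag_sigma (V := fun i => Fin (q i)) (fun i => ((∑ i, q i : ℕ) - q i : ℝ) ^ a) (2 ^ b)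

end MultipartiteGut

/-- The weights `c`, `d` of a large and a small part of a complete multipartite graph, and their
values `c'`, `d'` after one vertex has moved from the large to the small part. -/
structure IsWeightSqueeze (c d c' d' : ℝ) : Prop where
  pos : 0 < d
  small_le : d ≤ d'
  small_le_large : d' ≤ c'
  mul_le : c' * d' ≤ c * d

lemma isWeightSqueeze_rpow {n x y a : ℝ} (hyx : y + 1 ≤ x) (hxn : x + 1 < n) (ha : a ≤ 0) :
    IsWeightSqueeze ((n - (x + 1)) ^ a) ((n - y) ^ a) ((n - x) ^ a) ((n - (y + 1)) ^ a) where
  pos := Real.rpow_pos_of_pos (by linarith) a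
  small_le := Real.rpow_le_rpow_of_nonpos (by linarith) (by linarith) ha
  small_le_large := Real.rpow_le_rpow_of_nonpos (by linarith) (by linarith) ha
  mul_le := by
    rw [← Real.mul_rpow (by linarith) (by linarith), ← Real.mul_rpow (by linarith) (by linarith)]
    exact Real.rpow_le_rpow_of_nonpos (mul_pos (by linarith) (by linarith)) (by linarith) ha

namespace IsWeightSqueeze

variable {x y c d c' d' : ℝ}

lemma small_pos (h : IsWeightSqueeze c d c' d') : 0 < d' := h.pos.trans_le h.small_le

lemma large_pos (h : IsWeightSqueeze c d c' d') : 0 < c' := h.small_pos.trans_le h.small_le_large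

lemma large_le (h : IsWeightSqueeze c d c' d') : c' ≤ c :=
  le_of_mul_le_mul_right ((mul_le_mul_of_nonneg_left h.small_le h.large_pos.le).trans h.mul_le)
    h.pos

lemma sub_le_sub (h : IsWeightSqueeze c d c' d') : d' - d ≤ c - c' := by
  have : d * (d' - d) ≤ d * (c - c') := calc
    d * (d' - d) ≤ c' * (d' - d) :=
      mul_le_mul_of_nonneg_right (h.small_le.trans h.small_le_large) (sub_nonneg.2 h.small_le)
    _ = c' * d' - c' * d := by ring
    _ ≤ c * d - c' * d := sub_le_sub_right h.mul_le _
    _ = d * (c - c') := by ring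
  exact le_of_mul_le_mul_left this h.pos

lemma sq (h : IsWeightSqueeze c d c' d') : IsWeightSqueeze (c ^ 2) (d ^ 2) (c' ^ 2) (d' ^ 2) where
  pos := pow_pos h.pos 2
  small_le := pow_le_pow_left₀ h.pos.le h.small_le 2
  small_le_large := pow_le_pow_left₀ h.small_pos.le h.small_le_large 2
  mul_le := by
    rw [← mul_pow, ← mul_pow]
    exact pow_le_pow_left₀ (mul_pos h.large_pos h.small_pos).le h.mul_le 2

lemma mul_add_mul_le (h : IsWeightSqueeze c d c' d') (hy : 0 ≤ y) (hyx : y ≤ x) :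
    x * c' + y * d' ≤ x * c + y * d := by
  have : y * (d' - d) ≤ x * (c - c') :=
    mul_le_mul hyx h.sub_le_sub (sub_nonneg.2 h.small_le) (hy.trans hyx)
  linarith

lemma sum_unmoved_le (h : IsWeightSqueeze c d c' d') (hy : 1 ≤ y) (hyx : y ≤ x) :
    x * (x - 1) * c' ^ 2 + y * (y - 1) * d' ^ 2 ≤ x * (x - 1) * c ^ 2 + y * (y - 1) * d ^ 2 :=
  h.sq.mul_add_mul_le (mul_nonneg (by linarith) (by linarith))
    (mul_le_mul hyx (by linarith) (by linarith) (by linarith))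

lemma sum_inside_lt (h : IsWeightSqueeze c d c' d') (hy : 1 ≤ y) (hyx : y < x) :
    x * (x - 1) * c' ^ 2 + (y + 1) * y * d' ^ 2 <
      (x + 1) * x * c ^ 2 + y * (y - 1) * d ^ 2 := by
  have unmoved := h.sum_unmoved_le hy hyx.le
  have moved : y * d' ^ 2 < x * c ^ 2 :=
    mul_lt_mul hyx (h.sq.small_le_large.trans h.sq.large_le) h.sq.small_pos (by linarith)
  linarith

-- The summand `2 * (c - c') * _` is the gain coming from the moved vertex.
lemma sum_pairs_add_le (h : IsWeightSqueeze c d c' d') (hy : 1 ≤ y) (hyx : y ≤ x) :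
    x * (x - 1) * c' ^ 2 + (y + 1) * y * d' ^ 2 + 2 * (x * (y + 1)) * (c' * d') +
        2 * (c - c') * (x * c' + y * d') ≤
      (x + 1) * x * c ^ 2 + y * (y - 1) * d ^ 2 + 2 * ((x + 1) * y) * (c * d) := by
  have hy₀ : 0 ≤ y := by linarith
  have hx₀ : 0 ≤ x := hy₀.trans hyx
  have unmoved := h.sum_unmoved_le hy hyx
  have cross : x * y * (c' * d') ≤ x * y * (c * d) :=
    mul_le_mul_of_nonneg_left h.mul_le (mul_nonneg hx₀ hy₀)
  have moved : (c + d' - c') * (x * c' + y * d') ≤ c * (x * c + y * d) :=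
    mul_le_mul (by linarith [h.small_le_large]) (h.mul_add_mul_le hy₀ hyx)
      (add_nonneg (mul_nonneg hx₀ h.large_pos.le) (mul_nonneg hy₀ h.small_pos.le))
      (h.large_pos.le.trans h.large_le)
  linarith

end IsWeightSqueeze

section BalancingTransfer

variable {ι M : Type*}

/-- The family `q'` arises from `q` by moving one unit from `i` to `j` (a Pigou–Dalton transfer),
where `i` remains larger than `j` was before the move. -/
structure IsBalancingTransfer (q q' : ι → ℕ) (i j : ι) : Prop where
  source : q i = q' i + 1
  target : q' j = q j + 1
  rest : ∀ k, k ≠ i → k ≠ j → q' k = q k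
  lt : q j < q' i

lemma exists_isBalancingTransfer_of_not_equitableOn {q : ι → ℕ}
    (hq : ¬ Set.univ.EquitableOn q) : ∃ q' i j, IsBalancingTransfer q q' i j := by
  obtain ⟨i, -, j, -, hij⟩ := Set.not_equitableOn.1 hq
  have hne : i ≠ j := by rintro rfl; omega
  refine ⟨Function.update (Function.update q i (q i - 1)) j (q j + 1), i, j, ?_, ?_, ?_, ?_⟩
  · simp only [Function.update_of_ne hne, Function.update_self]
    omega
  · exact Function.update_self ..
  · intro k hki hkj
    rw [Function.update_of_ne hkj, Function.update_of_ne hki]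
  · simp only [Function.update_of_ne hne, Function.update_self]
    omega

namespace IsBalancingTransfer

variable {q q' : ι → ℕ} {i j : ι}

lemma ne (h : IsBalancingTransfer q q' i j) : i ≠ j := by
  rintro rfl
  have := h.source
  have := h.target
  omega

lemma pos (h : IsBalancingTransfer q q' i j) (hq : ∀ k, 0 < q k) (k : ι) : 0 < q' k := by
  by_cases hki : k = i
  · exact hki ▸ (hq j).trans h.lt
  by_cases hkj : k = j
  · rw [hkj, h.target]
    exact Nat.succ_pos _
  · exact h.rest k hki hkj ▸ hq k

variable [Fintype ι] [AddCommMonoid M]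

lemma sum_comp_left (h : IsBalancingTransfer q q' i j) (f : ℕ → M) :
    ∑ k, f (q k) = f (q' i + 1) + f (q j) + ∑ k ∈ {i, j}ᶜ, f (q k) := by
  rw [← h.source, ← Finset.sum_pair (f := fun k => f (q k)) h.ne, Finset.sum_add_sum_compl]

lemma sum_comp_right (h : IsBalancingTransfer q q' i j) (f : ℕ → M) :
    ∑ k, f (q' k) = f (q' i) + f (q j + 1) + ∑ k ∈ {i, j}ᶜ, f (q k) := by
  have rest_eq : ∑ k ∈ {i, j}ᶜ, f (q k) = ∑ k ∈ {i, j}ᶜ, f (q' k) :=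
    Finset.sum_congr rfl fun k hk => by
      have hk : k ≠ i ∧ k ≠ j := by simpa using hk
      rw [h.rest k hk.1 hk.2]
  rw [rest_eq, ← h.target, ← Finset.sum_pair (f := fun k => f (q' k)) h.ne,
    Finset.sum_add_sum_compl]

lemma sum_eq (h : IsBalancingTransfer q q' i j) : ∑ k, q' k = ∑ k, q k := by
  have left := h.sum_comp_left id
  have right := h.sum_comp_right id
  simp only [id] at left right
  omega

lemma partPairSum_lt (h : IsBalancingTransfer q q' i j) {w : ℕ → ℝ} {B : ℝ}
    (hq : ∀ k, 0 < q k) (hw : ∀ k, 0 ≤ w (q k))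
    (hsqueeze : IsWeightSqueeze (w (q' i + 1)) (w (q j)) (w (q' i)) (w (q j + 1))) (hB : 1 ≤ B)
    (strict : w (q' i) < w (q' i + 1) ∨ 1 < B) : partPairSum w B q' < partPairSum w B q := by
  have hy : (1 : ℝ) ≤ q j := mod_cast hq j
  have hyx : (q j : ℝ) < q' i := mod_cast h.lt
  have rest_nonneg : 0 ≤ ∑ k ∈ {i, j}ᶜ, q k * w (q k) :=
    Finset.sum_nonneg fun k _ => mul_nonneg (Nat.cast_nonneg _) (hw k)
  have total_le : q' i * w (q' i) + (q j + 1) * w (q j + 1) ≤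
      (q' i + 1) * w (q' i + 1) + q j * w (q j) := by
    linarith [hsqueeze.mul_add_mul_le (by linarith) hyx.le, hsqueeze.small_le_large,
      hsqueeze.large_le]
  have cross := mul_le_mul_of_nonneg_left total_le rest_nonneg
  have inside := hsqueeze.sum_inside_lt hy hyx
  have pairs := hsqueeze.sum_pairs_add_le hy hyx.le
  have weighted_pos : 0 < q' i * w (q' i) + q j * w (q j + 1) :=
    add_pos (mul_pos (by linarith) hsqueeze.large_pos) (mul_pos (by linarith) hsqueeze.small_pos)
  rw [partPairSum, partPairSum, h.sum_comp_left fun m => m * w m,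
    h.sum_comp_right fun m => m * w m, h.sum_comp_left fun m => m * w m ^ 2,
    h.sum_comp_right fun m => m * w m ^ 2, h.sum_comp_left fun m => m * (m - 1) * w m ^ 2,
    h.sum_comp_right fun m => m * (m - 1) * w m ^ 2]
  push_cast
  -- With `R` the total weight of the other parts, the difference of the two sides is `2 * R` times
  -- the loss in `total_le`, plus the loss in `pairs`, plus `B - 1` times the loss in `inside`.
  rcases strict with hlt | hB'
  · have inside_le := mul_le_mul_of_nonneg_left inside.le (sub_nonneg.2 hB)
    have gain := mul_pos (sub_pos.2 hlt) weighted_pos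
    linarith
  · have inside_lt := mul_lt_mul_of_pos_left inside (sub_pos.2 hB')
    have gain := mul_nonneg (sub_nonneg.2 hsqueeze.large_le) weighted_pos.le
    linarith

lemma gut_completeMultipartiteGraph_lt [Nontrivial ι] (h : IsBalancingTransfer q q' i j)
    {a b : ℝ} (ha : a ≤ 0) (hb : 0 ≤ b) (hab : a ≠ 0 ∨ b ≠ 0) (hq : ∀ k, 0 < q k) :
    gut (SimpleGraph.completeMultipartiteGraph fun k => Fin (q' k)) a b <
      gut (SimpleGraph.completeMultipartiteGraph fun k => Fin (q k)) a b := by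
  refine lt_of_mul_lt_mul_left ?_ zero_le_two
  rw [two_mul_gut_completeMultipartiteGraph a b hq,
    two_mul_gut_completeMultipartiteGraph a b (h.pos hq), h.sum_eq]
  have part_lt (k : ι) : (q k : ℝ) < (∑ l, q l : ℕ) := by
    obtain ⟨l, hl⟩ := exists_ne k
    exact_mod_cast Finset.single_lt_sum hl (Finset.mem_univ k) (Finset.mem_univ l) (hq l)
      fun _ _ _ => Nat.zero_le _
  have source_lt := part_lt i
  rw [h.source, Nat.cast_succ] at source_lt
  refine h.partPairSum_lt hq (fun k => Real.rpow_nonneg (sub_nonneg.2 (part_lt k).le) a) ?_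
    (Real.one_le_rpow one_le_two hb) (hab.imp (fun ha₀ => ?_) fun hb₀ => ?_)
  · simp only [Nat.cast_succ]
    exact isWeightSqueeze_rpow (mod_cast h.lt) source_lt ha
  · rw [Nat.cast_succ]
    exact Real.rpow_lt_rpow_of_neg (sub_pos.2 source_lt) (by linarith) (ha.lt_of_ne ha₀)
  · exact Real.one_lt_rpow one_lt_two (hb.lt_of_ne' hb₀)

end IsBalancingTransfer

end BalancingTransfer

section Equitable

variable {ι α : Type*} [Fintype ι]

lemma exists_equitableOn_lt_of_isBalancingTransfer_lt [LinearOrder α] {F : (ι → ℕ) → α}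
    (hF : ∀ {q q' : ι → ℕ} {i j : ι}, IsBalancingTransfer q q' i j → (∀ k, 0 < q k) → F q' < F q)
    {q : ι → ℕ} (hq : ∀ k, 0 < q k) (hne : ¬ Set.univ.EquitableOn q) :
    ∃ p : ι → ℕ, ∑ k, p k = ∑ k, q k ∧ Set.univ.EquitableOn p ∧ F p < F q := by
  let S := (Finset.piAntidiag Finset.univ (∑ k, q k)).filter fun p : ι → ℕ => ∀ k, 0 < p k
  have mem_S {p : ι → ℕ} : p ∈ S ↔ ∑ k, p k = ∑ k, q k ∧ ∀ k, 0 < p k := by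
    simp [S, Finset.mem_piAntidiag]
  obtain ⟨p, hpS, hmin⟩ := S.exists_min_image F ⟨q, mem_S.2 ⟨rfl, hq⟩⟩
  obtain ⟨hsum, hp⟩ := mem_S.1 hpS
  have equitable : Set.univ.EquitableOn p := by
    by_contra hnot
    obtain ⟨p', i, j, h⟩ := exists_isBalancingTransfer_of_not_equitableOn hnot
    exact (hF h hp).not_ge (hmin p' (mem_S.2 ⟨h.sum_eq.trans hsum, h.pos hp⟩))
  obtain ⟨q', i, j, h⟩ := exists_isBalancingTransfer_of_not_equitableOn hne
  exact ⟨p, hsum, equitable,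
    (hmin q' (mem_S.2 ⟨h.sum_eq, h.pos hq⟩)).trans_lt (hF h hq)⟩

lemma sum_eq_card_mul_add_card {q : ι → ℕ} {m : ℕ} (hq : ∀ i, q i = m ∨ q i = m + 1) :
    ∑ i, q i = Fintype.card ι * m + Fintype.card {i // q i = m + 1} := by
  have value (i : ι) : q i = m + if q i = m + 1 then 1 else 0 := by
    rcases hq i with h | h <;> simp [h]
  rw [Finset.sum_congr rfl fun i _ => value i, Finset.sum_add_distrib, Finset.sum_const,
    Finset.sum_boole, Finset.card_univ, smul_eq_mul, Nat.cast_id, Fintype.card_subtype]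

lemma exists_perm_of_equitableOn {p q : ι → ℕ} (hp : Set.univ.EquitableOn p)
    (hq : Set.univ.EquitableOn q) (hsum : ∑ i, p i = ∑ i, q i) :
    ∃ σ : Equiv.Perm ι, ∀ i, q i = p (σ i) := by
  simp only [← Finset.coe_univ, Finset.equitableOn_iff, Finset.mem_univ, true_imp_iff, hsum]
    at hp hq
  set m := (∑ i, q i) / (Finset.univ : Finset ι).card
  have card_eq : Fintype.card {i // q i = m + 1} = Fintype.card {i // p i = m + 1} := by
    have sum_p := sum_eq_card_mul_add_card hp
    have sum_q := sum_eq_card_mul_add_card hq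
    omega
  let e := Fintype.equivOfCardEq card_eq
  refine ⟨e.extendSubtype, fun i => ?_⟩
  by_cases hi : q i = m + 1
  · rw [hi, e.extendSubtype_mem i hi]
  · rw [(hq i).resolve_right hi, (hp _).resolve_right (e.extendSubtype_not_mem i hi)]

end Equitable

section Comparison

open SimpleGraph (completeMultipartiteGraph)

variable {ι : Type*} [Fintype ι] {a b : ℝ}

lemma nonempty_iso_completeMultipartiteGraph {p q : ι → ℕ} (hp : Set.univ.EquitableOn p)
    (hq : Set.univ.EquitableOn q) (hsum : ∑ i, p i = ∑ i, q i) :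
    Nonempty (completeMultipartiteGraph (fun i => Fin (q i)) ≃g
      completeMultipartiteGraph fun i => Fin (p i)) := by
  obtain ⟨σ, hσ⟩ := exists_perm_of_equitableOn hp hq hsum
  exact nonempty_iso_comap_top σ fun i => by
    rw [card_subtype_sigma_fst_eq, card_subtype_sigma_fst_eq, Fintype.card_fin, Fintype.card_fin,
      hσ]

lemma gut_completeMultipartiteGraph_lt_of_not_equitableOn [Nontrivial ι] (ha : a ≤ 0) (hb : 0 ≤ b)
    (hab : a ≠ 0 ∨ b ≠ 0) {p q : ι → ℕ} (hp : Set.univ.EquitableOn p) (hq : ∀ i, 0 < q i)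
    (hne : ¬ Set.univ.EquitableOn q) (hsum : ∑ i, p i = ∑ i, q i) :
    gut (completeMultipartiteGraph fun i => Fin (p i)) a b <
      gut (completeMultipartiteGraph fun i => Fin (q i)) a b := by
  obtain ⟨m, hmsum, hm, hlt⟩ := exists_equitableOn_lt_of_isBalancingTransfer_lt
    (F := fun q => gut (completeMultipartiteGraph fun i => Fin (q i)) a b)
    (fun h => h.gut_completeMultipartiteGraph_lt ha hb hab) hq hne
  obtain ⟨e⟩ := nonempty_iso_completeMultipartiteGraph hm hp (hmsum.trans hsum.symm)
  exact (gut_congr e a b).trans_lt hlt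

variable {V : Type*} [Fintype V]

lemma nonempty_iso_or_gut_lt [Nontrivial ι] {G : SimpleGraph V} (hG : G.Connected)
    (ha : a ≤ 0) (hb : 0 ≤ b) (hab : a ≠ 0 ∨ b ≠ 0) (C : G.Coloring ι)
    (hC : Function.Surjective C) {p : ι → ℕ} (hsum : ∑ i, p i = Fintype.card V)
    (hp : Set.univ.EquitableOn p) :
    Nonempty (G ≃g completeMultipartiteGraph fun i => Fin (p i)) ∨
      gut (completeMultipartiteGraph fun i => Fin (p i)) a b < gut G a b := by
  let q (i : ι) : ℕ := Fintype.card {v // C v = i}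
  have hq (i : ι) : 0 < q i := Fintype.card_pos_iff.2 (nonempty_subtype.2 (hC i))
  have hpq : ∑ i, p i = ∑ i, q i := by
    rw [hsum, ← Fintype.card_sigma, Fintype.card_congr (Equiv.sigmaFiberEquiv C)]
  have hGH : G ≤ (⊤ : SimpleGraph ι).comap C := fun _ _ h => C.valid h
  obtain ⟨e⟩ : Nonempty ((⊤ : SimpleGraph ι).comap C ≃g
      completeMultipartiteGraph fun i => Fin (q i)) :=
    nonempty_iso_comap_top (Equiv.refl ι) fun i => by
      rw [Equiv.refl_apply, card_subtype_sigma_fst_eq, Fintype.card_fin]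
  have completion_le : gut (completeMultipartiteGraph fun i => Fin (q i)) a b ≤ gut G a b := by
    rw [← gut_congr e]
    rcases hGH.eq_or_lt with hGH | hGH
    · rw [← hGH]
    · exact (gut_strictAnti hG hGH ha hb hab).le
  by_cases hne : Set.univ.EquitableOn q
  · obtain ⟨e'⟩ := nonempty_iso_completeMultipartiteGraph hp hne hpq
    rcases hGH.eq_or_lt with hGH | hGH
    · exact .inl ⟨hGH ▸ e.trans e'⟩
    · exact .inr (gut_congr (e.trans e') a b ▸ gut_strictAnti hG hGH ha hb hab)
  · exact .inr <| (gut_completeMultipartiteGraph_lt_of_not_equitableOn ha hb hab hp hq hne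
      hpq).trans_le completion_le

end Comparison

theorem stmt8_general {V ι : Type*} [Fintype V] [Fintype ι] [Nontrivial ι] {G : SimpleGraph V}
    (hG : G.Connected) {a b : ℝ} (ha : a ≤ 0) (hb : 0 ≤ b) (hab : a ≠ 0 ∨ b ≠ 0)
    (C : G.Coloring ι) (hC : Function.Surjective C) {p : ι → ℕ}
    (hsum : ∑ i, p i = Fintype.card V) (hp : Set.univ.EquitableOn p) :
    gut (SimpleGraph.completeMultipartiteGraph fun i => Fin (p i)) a b ≤ gut G a b ∧
    (gut G a b = gut (SimpleGraph.completeMultipartiteGraph fun i => Fin (p i)) a b ↔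
      Nonempty (G ≃g SimpleGraph.completeMultipartiteGraph fun i => Fin (p i))) := by
  rcases nonempty_iso_or_gut_lt hG ha hb hab C hC hsum hp with hiso | hlt
  · have heq := hiso.elim fun e => gut_congr e a b
    exact ⟨heq.ge, iff_of_true heq hiso⟩
  · exact ⟨hlt.le, iff_of_false hlt.ne' fun ⟨e⟩ => hlt.ne' (gut_congr e a b)⟩

theorem stmt8 {V : Type*} [Fintype V] (G : SimpleGraph V) (n : ℕ)
    (hn : n = Fintype.card V) (hG : G.Connected)
    (a b : ℝ) (ha : a ≤ 0) (hb : 0 ≤ b) (hab : a ≠ 0 ∨ b ≠ 0)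
    (χ : ℕ) (hχ : G.chromaticNumber = χ) (hχ2 : 2 ≤ χ) (hχn : χ ≤ n)
    (p : Fin χ → ℕ) (hsum : ∑ i, p i = n)
    (hbal : ∀ i j, |(p i : ℤ) - (p j : ℤ)| ≤ 1) :
    gut (SimpleGraph.completeMultipartiteGraph (fun i => Fin (p i))) a b ≤ gut G a b ∧
    (gut G a b = gut (SimpleGraph.completeMultipartiteGraph (fun i => Fin (p i))) a b ↔
      Nonempty (G ≃g SimpleGraph.completeMultipartiteGraph (fun i => Fin (p i)))) := by
  have : Nontrivial (Fin χ) := Fin.nontrivial_iff_two_le.2 hχ2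
  obtain ⟨C⟩ := SimpleGraph.chromaticNumber_le_iff_colorable.1 hχ.le
  have surjective := SimpleGraph.le_chromaticNumber_iff_forall_surjective.1 hχ.ge C
  have equitable : Set.univ.EquitableOn p := fun i j _ _ => by
    have := abs_le.1 (hbal i j)
    omega
  exact stmt8_general hG ha hb hab C surjective (hsum.trans hn) equitable
end

section
/- Let a and b be real numbers with 0 ≤ a < 1/2 and b ≤ 0, at least one of which is nonzero. Then for any connected k-partite simple graph G with n vertices, where 2 ≤ k ≤ n, Gut_{a,b}(G) ≤ Gut_{a,b}(K_{n1,n2,…,nk}), where K_{n1,n2,…,nk} is the complete k-partite graph on n vertices whose part sizes satisfy |n_i − n_j| ≤ 1 for all 1 ≤ i < j ≤ k and n1 + n2 + ⋯ + nk = n. Equality holds if and only if G is isomorphic to this complete k-partite graph. -/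
open scoped Classical

/-! Fix a proper colouring of `G` with class sizes `x`. A vertex in a class of size `m` has degree
at most `n - m`, and distinct vertices are at distance at least `2` if they share a colour and at
least `1` otherwise. As `b ≤ 0 ≤ a`, this bounds each term of the index, and twice the sum of the
bounds is a function `multipartiteSum` of `x` alone; equality throughout means that `G` is complete
multipartite with these parts. Because `t ↦ t ^ a` is concave, moving a vertex from one part to
another that is smaller by at least two strictly increases this function. Hence its maximisers are
the balanced size vectors, which are unique up to permutation. -/

section Transfer

variable {ι : Type*} {x p : ι → ℕ} {i j : ι}

/-- The part sizes `x` after one vertex has moved from part `i` to part `j`. It is meant for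
`i ≠ j` and a nonempty part `i`: otherwise the truncated subtraction does not preserve the sum. -/
noncomputable def transfer (x : ι → ℕ) (i j : ι) : ι → ℕ :=
  Function.update (Function.update x i (x i - 1)) j (x j + 1)

/-- Part sizes that differ pairwise by at most one. -/
def IsBalanced (x : ι → ℕ) : Prop := ∀ i j, x i ≤ x j + 1

variable [Fintype ι]

lemma sum_eq_sum_compl_pair_add {M : Type*} [AddCommMonoid M] (f : ι → M) (hij : i ≠ j) :
    ∑ l, f l = ∑ l ∈ {i, j}ᶜ, f l + (f i + f j) := by
  rw [← Finset.sum_compl_add_sum {i, j} f, Finset.sum_pair hij]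

lemma sum_comp_transfer {M : Type*} [AddCommMonoid M] (h : ℕ → M) (x : ι → ℕ) (hij : i ≠ j) :
    ∑ l, h (transfer x i j l) = ∑ l ∈ {i, j}ᶜ, h (x l) + (h (x i - 1) + h (x j + 1)) := by
  rw [sum_eq_sum_compl_pair_add _ hij]
  congr 1
  · refine Finset.sum_congr rfl fun l hl => ?_
    simp only [Finset.mem_compl, Finset.mem_insert, Finset.mem_singleton, not_or] at hl
    simp [transfer, hl.1, hl.2]
  · simp [transfer, hij]

lemma sum_transfer (hij : i ≠ j) (hi : 1 ≤ x i) : ∑ l, transfer x i j l = ∑ l, x l := by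
  rw [sum_comp_transfer (fun m => m) x hij, sum_eq_sum_compl_pair_add x hij]
  lia

lemma IsBalanced.eq_or_eq (hx : IsBalanced x) (i : ι) :
    x i = (∑ l, x l) / Fintype.card ι ∨ x i = (∑ l, x l) / Fintype.card ι + 1 := by
  have hcard : 0 < Fintype.card ι := Fintype.card_pos_iff.2 ⟨i⟩
  have hlower : (∑ l, x l) / Fintype.card ι < x i + 1 := by
    rw [Nat.div_lt_iff_lt_mul hcard, mul_comm, ← smul_eq_mul, ← Finset.card_univ,
      ← Finset.sum_const]
    exact Finset.sum_lt_sum (fun l _ => hx l i) ⟨i, Finset.mem_univ i, Nat.lt_succ_self _⟩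
  have hupper : x i - 1 ≤ (∑ l, x l) / Fintype.card ι := by
    rw [Nat.le_div_iff_mul_le hcard, mul_comm, ← smul_eq_mul, ← Finset.card_univ]
    exact Finset.card_nsmul_le_sum _ _ _ fun l _ => Nat.sub_le_of_le_add (hx i l)
  lia

lemma IsBalanced.sum_eq (hx : IsBalanced x) :
    ∑ l, x l = Fintype.card ι * ((∑ l, x l) / Fintype.card ι) +
      Fintype.card {l // x l = (∑ l, x l) / Fintype.card ι + 1} := by
  set q := (∑ l, x l) / Fintype.card ι
  calc ∑ l, x l = ∑ l, (q + if x l = q + 1 then 1 else 0) :=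
        Finset.sum_congr rfl fun l _ => by
          rcases hx.eq_or_eq l with h | h <;> simp [h, q]
    _ = _ := by simp [Finset.sum_add_distrib, Fintype.card_subtype]

lemma IsBalanced.exists_perm_of_sum_eq (hx : IsBalanced x) (hp : IsBalanced p)
    (hsum : ∑ l, x l = ∑ l, p l) : ∃ σ : Equiv.Perm ι, x = p ∘ σ := by
  have hxsum := hx.sum_eq
  have hxval := hx.eq_or_eq
  rw [hsum] at hxsum hxval
  have hlarge : Nonempty ({l // x l = (∑ l, p l) / Fintype.card ι + 1} ≃
      {l // p l = (∑ l, p l) / Fintype.card ι + 1}) :=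
    Fintype.card_eq.1 (Nat.add_left_cancel (hxsum.symm.trans hp.sum_eq))
  obtain ⟨e⟩ := hlarge
  refine ⟨e.extendSubtype, funext fun l => ?_⟩
  by_cases h : x l = (∑ l, p l) / Fintype.card ι + 1
  · exact h.trans (e.extendSubtype_mem l h).symm
  · exact ((hxval l).resolve_right h).trans
      ((hp.eq_or_eq _).resolve_right (e.extendSubtype_not_mem l h)).symm

variable {R : Type*} [LinearOrder R] {F : (ι → ℕ) → R}

lemma IsBalanced.of_forall_apply_le
    (hF : ∀ y i j, ∑ l, y l = ∑ l, x l → y j + 2 ≤ y i → F y < F (transfer y i j))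
    (hmax : ∀ y, ∑ l, y l = ∑ l, x l → F y ≤ F x) : IsBalanced x := by
  intro i j
  by_contra! hlt
  have hij : i ≠ j := by rintro rfl; lia
  exact (hF x i j rfl hlt).not_ge (hmax _ (sum_transfer hij (by lia)))

lemma IsBalanced.apply_le_of_sum_eq (hp : IsBalanced p)
    (hperm : ∀ y (σ : Equiv.Perm ι), F (y ∘ σ) = F y)
    (hF : ∀ y i j, ∑ l, y l = ∑ l, p l → y j + 2 ≤ y i → F y < F (transfer y i j))
    (hsum : ∑ l, x l = ∑ l, p l) : F x ≤ F p := by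
  have mem_sizes {y : ι → ℕ} :
      y ∈ Finset.univ.piAntidiag (∑ l, p l) ↔ ∑ l, y l = ∑ l, p l := by simp
  obtain ⟨z, hz, hzmax⟩ := Finset.exists_max_image _ F ⟨p, mem_sizes.2 rfl⟩
  rw [mem_sizes] at hz
  simp only [mem_sizes] at hzmax
  obtain ⟨σ, rfl⟩ :=
    (IsBalanced.of_forall_apply_le (hz ▸ hF) (hz ▸ hzmax)).exists_perm_of_sum_eq hp hz
  exact (hzmax x hsum).trans_eq (hperm p σ)

lemma IsBalanced.exists_perm_of_apply_eq (hp : IsBalanced p)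
    (hperm : ∀ y (σ : Equiv.Perm ι), F (y ∘ σ) = F y)
    (hF : ∀ y i j, ∑ l, y l = ∑ l, p l → y j + 2 ≤ y i → F y < F (transfer y i j))
    (hsum : ∑ l, x l = ∑ l, p l) (heq : F x = F p) : ∃ σ : Equiv.Perm ι, x = p ∘ σ := by
  have hmax (y : ι → ℕ) (hy : ∑ l, y l = ∑ l, x l) : F y ≤ F x :=
    heq ▸ hp.apply_le_of_sum_eq hperm hF (hy.trans hsum)
  exact (IsBalanced.of_forall_apply_le (hsum ▸ hF) hmax).exists_perm_of_sum_eq hp hsum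

end Transfer

section WeightedPairs

variable {ι : Type*} [Fintype ι] {w : ℕ → ℝ} {x : ι → ℕ} {i j : ι}

/-- The sum of `w_u * w_v` over the ordered pairs of distinct vertices, when the parts have sizes
`x` and each vertex of a part of size `m` has weight `w m`. -/
noncomputable def pairSum (w : ℕ → ℝ) (x : ι → ℕ) : ℝ :=
  (∑ i, x i * w (x i)) ^ 2 - ∑ i, x i * w (x i) ^ 2

/-- The part of `pairSum w x` that comes from the pairs of vertices in different parts. -/
noncomputable def crossPairSum (w : ℕ → ℝ) (x : ι → ℕ) : ℝ :=
  (∑ i, x i * w (x i)) ^ 2 - ∑ i, (x i * w (x i)) ^ 2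

/-- Like `pairSum w x`, with the pairs inside a part discounted by the factor `β`. For
`w m = (n - m) ^ a` and `β = 2 ^ b` this is twice the general Gutman index of the complete
multipartite graph on `n` vertices with part sizes `x`. -/
noncomputable def multipartiteSum (w : ℕ → ℝ) (β : ℝ) (x : ι → ℕ) : ℝ :=
  β * pairSum w x + (1 - β) * crossPairSum w x

lemma multipartiteSum_comp_perm (w : ℕ → ℝ) (β : ℝ) (x : ι → ℕ) (σ : Equiv.Perm ι) :
    multipartiteSum w β (x ∘ σ) = multipartiteSum w β x := by
  simp only [multipartiteSum, pairSum, crossPairSum, Function.comp_apply,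
    Equiv.sum_comp σ fun i => (x i : ℝ) * w (x i),
    Equiv.sum_comp σ fun i => (x i : ℝ) * w (x i) ^ 2,
    Equiv.sum_comp σ fun i => ((x i : ℝ) * w (x i)) ^ 2]

-- In the next lemmas two parts of sizes `y + d + 1` and `y`, whose vertices have weights `X` and
-- `Y`, become parts of sizes `y + d` and `y + 1` with weights `X'` and `Y'`. Match `y` vertices of
-- the first part with those of the second: no matched pair loses in sum or in product, and none of
-- the `d + 1` unmatched vertices loses weight.

lemma mul_le_mul_of_add_le_add {X Y X' Y' : ℝ} (hX : 0 ≤ X) (hXX' : X ≤ X') (hXY' : X ≤ Y')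
    (hadd : X + Y ≤ X' + Y') : X * Y ≤ X' * Y' := by
  linear_combination mul_nonneg (sub_nonneg.2 hXX') (sub_nonneg.2 hXY') +
    mul_le_mul_of_nonneg_left hadd hX

lemma weighted_sum_le_of_add_le_add {X Y X' Y' : ℝ} (y d : ℕ) (hXX' : X ≤ X') (hXY' : X ≤ Y')
    (hadd : X + Y ≤ X' + Y') : (y + d + 1) * X + y * Y ≤ (y + d) * X' + (y + 1) * Y' := by
  linear_combination (y : ℝ) * hadd + (d : ℝ) * hXX' + hXY'

lemma weighted_cross_le_of_add_le_add {X Y X' Y' : ℝ} (y : ℕ) {d : ℕ} (hd : 1 ≤ d) (hX : 0 ≤ X)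
    (hXX' : X ≤ X') (hXY' : X ≤ Y') (hadd : X + Y ≤ X' + Y') :
    (y + d + 1) * X * (y * Y) + X' * Y' ≤ (y + d) * X' * ((y + 1) * Y') := by
  have hprod := mul_le_mul_of_add_le_add hX hXX' hXY' hadd
  have hX'Y' : 0 ≤ X' * Y' := mul_nonneg (hX.trans hXX') (hX.trans hXY')
  have hd' : (1 : ℝ) ≤ d := by exact_mod_cast hd
  linear_combination (y * (y + d + 1) : ℝ) * hprod + mul_le_mul_of_nonneg_right hd' hX'Y'

lemma weighted_pairs_le_of_add_le_add {X Y X' Y' : ℝ} (y : ℕ) {d : ℕ} (hd : 1 ≤ d) (hX : 0 ≤ X)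
    (hY : 0 ≤ Y) (hXX' : X ≤ X') (hXY' : X ≤ Y') (hadd : X + Y ≤ X' + Y') :
    ((y + d + 1) * X + y * Y) ^ 2 - ((y + d + 1) * X ^ 2 + y * Y ^ 2) + 2 * (X' * Y' - X ^ 2) ≤
      ((y + d) * X' + (y + 1) * Y') ^ 2 - ((y + d) * X' ^ 2 + (y + 1) * Y' ^ 2) := by
  have hd' : (0 : ℝ) ≤ d - 1 := sub_nonneg.2 (by exact_mod_cast hd)
  have hy : (0 : ℝ) ≤ y * (y - 1) := by
    cases y with
    | zero => simp
    | succ m => rw [Nat.cast_succ, add_sub_cancel_right]; positivity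
  have hX' : 0 ≤ X' := hX.trans hXX'
  have hY' : 0 ≤ Y' := hX.trans hXY'
  have within_matched : X * Y ≤ X' * Y' := mul_le_mul_of_add_le_add hX hXX' hXY' hadd
  have between_matched : (X + Y) ^ 2 ≤ (X' + Y') ^ 2 := by gcongr
  have unmatched : (d + 1) * X ≤ d * X' + Y' := by
    linear_combination (d : ℝ) * hXX' + hXY'
  have matched_unmatched : (X + Y) * ((d + 1) * X) ≤ (X' + Y') * (d * X' + Y') := by gcongr
  have hsq : X ^ 2 ≤ X' ^ 2 := by gcongr
  have hmul : X ^ 2 ≤ X' * Y' := by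
    rw [sq]; gcongr
  linear_combination 2 * (y : ℝ) * within_matched + (y * (y - 1) : ℝ) * between_matched +
    2 * (y : ℝ) * matched_unmatched + (d * (d - 1) : ℝ) * hsq + 2 * (d - 1 : ℝ) * hmul

variable (hw : ∀ m, 0 ≤ w m) (hanti : Antitone w) (hij : x j + 2 ≤ x i)
  (hconc : w (x i) + w (x j) ≤ w (x i - 1) + w (x j + 1))

include hw hanti hij hconc

lemma sq_sum_sub_sum_add_le_transfer (g : ℕ → ℝ) {δ : ℝ}
    (hδ : (x i * w (x i) + x j * w (x j)) ^ 2 - (g (x i) + g (x j)) + δ ≤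
      ((x i - 1 : ℕ) * w (x i - 1) + (x j + 1 : ℕ) * w (x j + 1)) ^ 2 -
        (g (x i - 1) + g (x j + 1))) :
    (∑ l, x l * w (x l)) ^ 2 - ∑ l, g (x l) + δ ≤
      (∑ l, transfer x i j l * w (transfer x i j l)) ^ 2 - ∑ l, g (transfer x i j l) := by
  have hne : i ≠ j := by rintro rfl; lia
  have hrest : 0 ≤ ∑ l ∈ {i, j}ᶜ, x l * w (x l) :=
    Finset.sum_nonneg fun l _ => mul_nonneg (Nat.cast_nonneg _) (hw _)
  have hpair : x i * w (x i) + x j * w (x j) ≤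
      (x i - 1 : ℕ) * w (x i - 1) + (x j + 1 : ℕ) * w (x j + 1) := by
    obtain ⟨d, hd⟩ : ∃ d, x i = x j + d + 1 := ⟨x i - x j - 1, by lia⟩
    have h := weighted_sum_le_of_add_le_add (x j) d (hanti (Nat.sub_le (x i) 1))
      (hanti (by lia : x j + 1 ≤ x i)) hconc
    rw [hd, Nat.add_sub_cancel] at h ⊢
    exact_mod_cast h
  rw [sum_comp_transfer (fun m => (m : ℝ) * w m) x hne, sum_comp_transfer g x hne,
    sum_eq_sum_compl_pair_add (fun l => (x l : ℝ) * w (x l)) hne,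
    sum_eq_sum_compl_pair_add (fun l => g (x l)) hne]
  linear_combination 2 * mul_le_mul_of_nonneg_left hpair hrest + hδ

lemma crossPairSum_add_le_transfer :
    crossPairSum w x + 2 * (w (x i - 1) * w (x j + 1)) ≤ crossPairSum w (transfer x i j) := by
  refine sq_sum_sub_sum_add_le_transfer hw hanti hij hconc (fun m => (m * w m) ^ 2) ?_
  obtain ⟨d, hd⟩ : ∃ d, x i = x j + d + 1 := ⟨x i - x j - 1, by lia⟩
  have h := weighted_cross_le_of_add_le_add (x j) (by lia : 1 ≤ d) (hw (x i))
    (hanti (Nat.sub_le (x i) 1)) (hanti (by lia : x j + 1 ≤ x i)) hconc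
  rw [hd, Nat.add_sub_cancel] at h ⊢
  push_cast
  linear_combination 2 * h

lemma pairSum_add_le_transfer :
    pairSum w x + 2 * (w (x i - 1) * w (x j + 1) - w (x i) ^ 2) ≤
      pairSum w (transfer x i j) := by
  refine sq_sum_sub_sum_add_le_transfer hw hanti hij hconc (fun m => m * w m ^ 2) ?_
  obtain ⟨d, hd⟩ : ∃ d, x i = x j + d + 1 := ⟨x i - x j - 1, by lia⟩
  have h := weighted_pairs_le_of_add_le_add (x j) (by lia : 1 ≤ d) (hw (x i)) (hw (x j))
    (hanti (Nat.sub_le (x i) 1)) (hanti (by lia : x j + 1 ≤ x i)) hconc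
  rw [hd, Nat.add_sub_cancel] at h ⊢
  exact_mod_cast h

lemma multipartiteSum_lt_transfer {β : ℝ} (hβ0 : 0 ≤ β) (hβ1 : β ≤ 1)
    (hlt : β * w (x i) ^ 2 < w (x i - 1) * w (x j + 1)) :
    multipartiteSum w β x < multipartiteSum w β (transfer x i j) := by
  have hpair := mul_le_mul_of_nonneg_left (pairSum_add_le_transfer hw hanti hij hconc) hβ0
  have hcross := mul_le_mul_of_nonneg_left (crossPairSum_add_le_transfer hw hanti hij hconc)
    (sub_nonneg.2 hβ1)
  rw [multipartiteSum, multipartiteSum]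
  linear_combination hpair + hcross + 2 * hlt

end WeightedPairs

section DegreePow

/-- The contribution `d ^ a` of a vertex whose degree is the largest possible one, `d = n - m`,
when it lies in a colour class of size `m` of a graph on `n` vertices. The subtraction is
truncated. -/
noncomputable def degreePow (n : ℕ) (a : ℝ) (m : ℕ) : ℝ := ((n - m : ℕ) : ℝ) ^ a

lemma add_le_add_of_concaveOn {s : Set ℝ} {f : ℝ → ℝ} (hf : ConcaveOn ℝ s f) {x y u v : ℝ}
    (hx : x ∈ s) (hy : y ∈ s) (hxu : x ≤ u) (huy : u ≤ y) (hsum : x + y = u + v) :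
    f x + f y ≤ f u + f v := by
  rcases (hxu.trans huy).eq_or_lt with rfl | hxy
  · obtain rfl : u = x := by linarith
    obtain rfl : v = u := by linarith
    rfl
  have hd : 0 < y - x := sub_pos.2 hxy
  have hs : 0 ≤ (u - x) / (y - x) := div_nonneg (sub_nonneg.2 hxu) hd.le
  have ht : 0 ≤ (y - u) / (y - x) := div_nonneg (sub_nonneg.2 huy) hd.le
  have hst : (u - x) / (y - x) + (y - u) / (y - x) = 1 := by field_simp; ring
  have hu := hf.2 hx hy ht hs (by rw [add_comm, hst])
  have hv := hf.2 hx hy hs ht hst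
  have hu' : ((y - u) / (y - x)) • x + ((u - x) / (y - x)) • y = u := by
    simp only [smul_eq_mul]; field_simp; ring
  have hv' : ((u - x) / (y - x)) • x + ((y - u) / (y - x)) • y = v := by
    rw [← sub_eq_of_eq_add' hsum]; simp only [smul_eq_mul]; field_simp; ring
  rw [hu'] at hu
  rw [hv'] at hv
  simp only [smul_eq_mul] at hu hv
  linear_combination hu + hv - (f x + f y) * hst

variable {n : ℕ} {a : ℝ} {m l : ℕ}

lemma degreePow_nonneg (n : ℕ) (a : ℝ) (m : ℕ) : 0 ≤ degreePow n a m :=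
  Real.rpow_nonneg (Nat.cast_nonneg _) _

lemma degreePow_pos (hm : m < n) : 0 < degreePow n a m :=
  Real.rpow_pos_of_pos (Nat.cast_pos.2 (Nat.sub_pos_of_lt hm)) _

lemma degreePow_antitone (ha : 0 ≤ a) : Antitone (degreePow n a) := fun _ _ h =>
  Real.rpow_le_rpow (Nat.cast_nonneg _) (Nat.cast_le.2 (Nat.sub_le_sub_left h n)) ha

lemma degreePow_lt_degreePow (ha : 0 < a) (hlm : l < m) (hln : l < n) :
    degreePow n a m < degreePow n a l :=
  Real.rpow_lt_rpow (Nat.cast_nonneg _) (Nat.cast_lt.2 (Nat.sub_lt_sub_left hln hlm)) ha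

lemma degreePow_add_le (ha0 : 0 ≤ a) (ha1 : a ≤ 1) (hlm : l < m) (hmn : m ≤ n) :
    degreePow n a m + degreePow n a l ≤ degreePow n a (m - 1) + degreePow n a (l + 1) := by
  refine add_le_add_of_concaveOn (Real.concaveOn_rpow ha0 ha1) (Set.mem_Ici.2 (Nat.cast_nonneg _))
    (Set.mem_Ici.2 (Nat.cast_nonneg _)) ?_ ?_ ?_ <;> norm_cast <;> lia

lemma mul_sq_degreePow_lt {β : ℝ} (ha : 0 ≤ a) (hβ1 : β ≤ 1) (hab : a ≠ 0 ∨ β ≠ 1)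
    (hlm : l + 2 ≤ m) (hmn : m ≤ n) :
    β * degreePow n a m ^ 2 < degreePow n a (m - 1) * degreePow n a (l + 1) := by
  rcases ha.eq_or_lt with rfl | ha
  · simpa [degreePow] using hβ1.lt_of_ne (hab.resolve_left (not_not.2 rfl))
  · have hpos : 0 < degreePow n a (l + 1) := degreePow_pos (by lia)
    calc β * degreePow n a m ^ 2 ≤ degreePow n a m * degreePow n a m := by
          rw [← sq]; exact mul_le_of_le_one_left (sq_nonneg _) hβ1
      _ ≤ degreePow n a m * degreePow n a (l + 1) :=
          mul_le_mul_of_nonneg_left (degreePow_antitone ha.le (by lia)) (degreePow_nonneg _ _ _)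
      _ < degreePow n a (m - 1) * degreePow n a (l + 1) :=
          mul_lt_mul_of_pos_right (degreePow_lt_degreePow ha (by lia) (by lia)) hpos

lemma multipartiteSum_degreePow_lt_transfer {ι : Type*} [Fintype ι] {β : ℝ} {x : ι → ℕ} {i j : ι}
    (ha0 : 0 ≤ a) (ha1 : a ≤ 1) (hβ0 : 0 ≤ β) (hβ1 : β ≤ 1) (hab : a ≠ 0 ∨ β ≠ 1)
    (hxn : ∑ l, x l = n) (hij : x j + 2 ≤ x i) :
    multipartiteSum (degreePow n a) β x < multipartiteSum (degreePow n a) β (transfer x i j) := by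
  have hin : x i ≤ n := hxn ▸ Finset.single_le_sum_of_canonicallyOrdered (Finset.mem_univ i)
  exact multipartiteSum_lt_transfer (degreePow_nonneg n a) (degreePow_antitone ha0) hij
    (degreePow_add_le ha0 ha1 (by lia) hin) hβ0 hβ1 (mul_sq_degreePow_lt ha0 hβ1 hab hij hin)

end DegreePow

section DistinctPairs

variable {V : Type*} [Fintype V]

lemma two_mul_sum_not_isDiag {R : Type*} [Semiring R] (f : Sym2 V → R) :
    2 * ∑ e with ¬ e.IsDiag, f e = ∑ q ∈ Finset.univ.offDiag, f s(q.1, q.2) := by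
  have hmaps (q : V × V) (hq : q ∈ Finset.univ.offDiag) :
      s(q.1, q.2) ∈ ({e | ¬ e.IsDiag} : Finset (Sym2 V)) := by simpa using hq
  rw [← Finset.sum_fiberwise_of_maps_to hmaps, Finset.mul_sum]
  refine Finset.sum_congr rfl fun e he => ?_
  induction e with | _ u v
  have hne : u ≠ v := by simpa using he
  have hfiber : {q ∈ (Finset.univ : Finset V).offDiag | s(q.1, q.2) = s(u, v)} =
      {(u, v), (v, u)} := by
    ext ⟨_, _⟩
    simp only [Finset.mem_filter, Finset.mem_offDiag, Finset.mem_univ, Sym2.eq_iff,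
      Finset.mem_insert, Finset.mem_singleton, Prod.mk.injEq]
    grind
  rw [hfiber, Finset.sum_pair (by simp [hne]), Sym2.eq_swap (a := v), two_mul]

lemma two_mul_gut_s9 (G : SimpleGraph V) (a b : ℝ) :
    2 * gut G a b = ∑ q ∈ Finset.univ.offDiag,
      ((G.degree q.1 : ℝ) * G.degree q.2) ^ a * (G.dist q.1 q.2 : ℝ) ^ b := by
  rw [gut, two_mul_sum_not_isDiag]
  rfl

lemma sum_offDiag {M : Type*} [AddCommGroup M] (f : V → V → M) :
    ∑ q ∈ Finset.univ.offDiag, f q.1 q.2 = ∑ u, ∑ v, f u v - ∑ u, f u u := by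
  rw [← Finset.sum_product', ← Finset.diag_union_offDiag,
    Finset.sum_union (Finset.disjoint_diag_offDiag _), Finset.sum_diag, add_sub_cancel_left]

end DistinctPairs

section ColorDist

variable {V ι : Type*} {G : SimpleGraph V} (C : G.Coloring ι) {u v : V}

/-- The distance between distinct vertices `u` and `v` in a complete multipartite graph whose parts
are the colour classes of `c`; it is the least one that a proper colouring `c` allows. -/
noncomputable def colorDist (c : V → ι) (u v : V) : ℕ := if c u = c v then 2 else 1

lemma colorDist_pos (c : V → ι) (u v : V) : 0 < colorDist c u v := by
  unfold colorDist; split_ifs <;> simp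

lemma colorDist_le_dist (hG : G.Connected) (huv : u ≠ v) : colorDist C u v ≤ G.dist u v := by
  unfold colorDist
  split_ifs with h
  · exact hG.one_lt_dist_of_ne_of_not_adj huv fun hadj => C.valid hadj h
  · exact hG.pos_dist_of_ne huv

lemma dist_eq_colorDist (hG : G.Connected) (hC : ∀ u v, C u ≠ C v → G.Adj u v) (huv : u ≠ v) :
    G.dist u v = colorDist C u v := by
  refine le_antisymm ?_ (colorDist_le_dist C hG huv)
  unfold colorDist
  split_ifs with h
  · have : Nontrivial V := ⟨u, v, huv⟩
    obtain ⟨x, hux⟩ := hG.preconnected.exists_adj_of_nontrivial u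
    have hxv : G.Adj x v := hC x v (h ▸ (C.valid hux).symm)
    exact SimpleGraph.dist_le (.cons hux (.cons hxv .nil))
  · exact (SimpleGraph.dist_eq_one_iff_adj.2 (hC u v h)).le

end ColorDist

section ColorClasses

variable {V ι : Type*} [Fintype V]

/-- The number of vertices that `c` assigns the colour `i`. -/
noncomputable def partSize (c : V → ι) (i : ι) : ℕ := Fintype.card {v // c v = i}

variable [Fintype ι]

lemma sum_comp_eq_sum_partSize_smul {M : Type*} [AddCommMonoid M] (c : V → ι) (h : ι → M) :
    ∑ v, h (c v) = ∑ i, partSize c i • h i := by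
  simp only [← Finset.sum_fiberwise' Finset.univ c h, Finset.sum_const, partSize,
    Fintype.card_subtype]

lemma sum_partSize (c : V → ι) : ∑ i, partSize c i = Fintype.card V := by
  simpa using (sum_comp_eq_sum_partSize_smul c fun _ => (1 : ℕ)).symm

lemma sum_offDiag_mul_colorDist_rpow (w : ℕ → ℝ) (b : ℝ) (c : V → ι) :
    ∑ q ∈ Finset.univ.offDiag,
      w (partSize c (c q.1)) * w (partSize c (c q.2)) * (colorDist c q.1 q.2 : ℝ) ^ b =
      multipartiteSum w (2 ^ b) (partSize c) := by
  set W : ι → ℝ := fun i => w (partSize c i)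
  have hsum (h : ι → ℝ) : ∑ v, h (c v) = ∑ i, partSize c i * h i := by
    simp only [sum_comp_eq_sum_partSize_smul, nsmul_eq_mul]
  have hdist (u v : V) : (colorDist c u v : ℝ) ^ b = if c u = c v then 2 ^ b else 1 := by
    unfold colorDist; split_ifs <;> simp
  have hinner (i : ι) : ∑ v, W i * W (c v) * (if i = c v then 2 ^ b else 1) =
      W i * ∑ j, partSize c j * W j - (1 - 2 ^ b) * (partSize c i * W i ^ 2) := by
    rw [hsum fun j => W i * W j * if i = j then 2 ^ b else 1, Finset.mul_sum,
      ← Fintype.sum_ite_eq i fun j => (1 - 2 ^ b) * (partSize c j * W j ^ 2),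
      ← Finset.sum_sub_distrib]
    refine Finset.sum_congr rfl fun j _ => ?_
    split_ifs with h
    · rw [h]; ring
    · ring
  rw [sum_offDiag (fun u v => W (c u) * W (c v) * (colorDist c u v : ℝ) ^ b)]
  simp only [hdist, hinner, if_true]
  rw [Finset.sum_sub_distrib, ← Finset.sum_mul, hsum W, ← Finset.mul_sum,
    hsum fun i => partSize c i * W i ^ 2, ← Finset.sum_mul, hsum fun i => W i * W i,
    multipartiteSum, pairSum, crossPairSum]
  simp only [W, sq, mul_assoc, mul_left_comm]
  ring

end ColorClasses

section RpowMul

variable {d D r e a b : ℝ}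

lemma rpow_mul_rpow_le_of_nonneg_of_nonpos (hd : 0 ≤ d) (hdD : d ≤ D) (he : 0 < e) (her : e ≤ r)
    (ha : 0 ≤ a) (hb : b ≤ 0) : d ^ a * r ^ b ≤ D ^ a * e ^ b :=
  mul_le_mul (Real.rpow_le_rpow hd hdD ha) (Real.rpow_le_rpow_of_nonpos he her hb)
    (Real.rpow_nonneg (he.le.trans her) b) (Real.rpow_nonneg (hd.trans hdD) a)

lemma rpow_mul_rpow_eq_iff_of_nonneg_of_nonpos (hd : 0 < d) (hdD : d ≤ D) (he : 0 < e)
    (her : e ≤ r) (ha : 0 ≤ a) (hb : b ≤ 0) :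
    d ^ a * r ^ b = D ^ a * e ^ b ↔ (a = 0 ∨ d = D) ∧ (b = 0 ∨ r = e) := by
  have hr : 0 < r := he.trans_le her
  have hpow_eq {s t c : ℝ} (hs : 0 < s) (ht : 0 < t) : s ^ c = t ^ c ↔ c = 0 ∨ s = t := by
    rcases eq_or_ne c 0 with rfl | hc
    · simp
    · simp [Real.rpow_left_inj hs.le ht.le hc, hc]
  rw [mul_eq_mul_iff_eq_and_eq_of_pos (Real.rpow_le_rpow hd.le hdD ha)
    (Real.rpow_le_rpow_of_nonpos he her hb) (Real.rpow_pos_of_pos hd a)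
    (Real.rpow_pos_of_pos he b), hpow_eq hd (hd.trans_le hdD), hpow_eq hr he]

end RpowMul

section Coloring

variable {V ι : Type*} [Fintype V] {G : SimpleGraph V} (C : G.Coloring ι) {u v : V}

lemma card_sub_partSize (c : V → ι) (i : ι) :
    Fintype.card V - partSize c i = Finset.card {v | c v ≠ i} := by
  rw [partSize, ← Fintype.card_subtype_compl, Fintype.card_subtype]

lemma neighborFinset_subset_filter_ne (u : V) :
    G.neighborFinset u ⊆ ({v | C v ≠ C u} : Finset V) := fun v hv => by
  simpa using (C.valid ((G.mem_neighborFinset u v).1 hv)).symm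

lemma degree_le_card_sub_partSize (u : V) :
    G.degree u ≤ Fintype.card V - partSize C (C u) := by
  rw [card_sub_partSize, ← G.card_neighborFinset_eq_degree]
  exact Finset.card_le_card (neighborFinset_subset_filter_ne C u)

lemma degree_eq_card_sub_partSize_iff :
    G.degree u = Fintype.card V - partSize C (C u) ↔ ∀ v, C u ≠ C v → G.Adj u v := by
  have hsub := neighborFinset_subset_filter_ne C u
  have hcard : G.degree u = Finset.card {v | C v ≠ C u} ↔
      ({v | C v ≠ C u} : Finset V) ⊆ G.neighborFinset u :=
    ⟨fun h => (Finset.eq_of_subset_of_card_le hsub h.ge).superset,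
      fun h => congrArg Finset.card (hsub.antisymm h)⟩
  rw [card_sub_partSize, hcard]
  simp [Finset.subset_iff, eq_comm]

variable {a b : ℝ}

lemma degreePow_mul_degreePow (n : ℕ) (a : ℝ) (l m : ℕ) :
    degreePow n a l * degreePow n a m = ((n - l : ℕ) * (n - m : ℕ) : ℝ) ^ a :=
  (Real.mul_rpow (Nat.cast_nonneg _) (Nat.cast_nonneg _)).symm

lemma degree_mul_degree_le (C : G.Coloring ι) (u v : V) : (G.degree u * G.degree v : ℝ) ≤
    (Fintype.card V - partSize C (C u) : ℕ) * (Fintype.card V - partSize C (C v) : ℕ) := by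
  gcongr <;> exact degree_le_card_sub_partSize C _

lemma rpow_degree_mul_rpow_dist_le (C : G.Coloring ι) (hG : G.Connected) (ha : 0 ≤ a) (hb : b ≤ 0)
    (huv : u ≠ v) :
    (G.degree u * G.degree v : ℝ) ^ a * (G.dist u v : ℝ) ^ b ≤
      degreePow (Fintype.card V) a (partSize C (C u)) *
        degreePow (Fintype.card V) a (partSize C (C v)) * (colorDist C u v : ℝ) ^ b := by
  rw [degreePow_mul_degreePow]
  exact rpow_mul_rpow_le_of_nonneg_of_nonpos (by positivity) (degree_mul_degree_le C u v)
    (Nat.cast_pos.2 (colorDist_pos C u v)) (Nat.cast_le.2 (colorDist_le_dist C hG huv)) ha hb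

lemma rpow_degree_mul_rpow_dist_eq_iff (C : G.Coloring ι) (hG : G.Connected) (ha : 0 ≤ a)
    (hb : b ≤ 0) (huv : u ≠ v) :
    (G.degree u * G.degree v : ℝ) ^ a * (G.dist u v : ℝ) ^ b =
      degreePow (Fintype.card V) a (partSize C (C u)) *
        degreePow (Fintype.card V) a (partSize C (C v)) * (colorDist C u v : ℝ) ^ b ↔
    (a = 0 ∨ G.degree u = Fintype.card V - partSize C (C u) ∧
        G.degree v = Fintype.card V - partSize C (C v)) ∧
      (b = 0 ∨ G.dist u v = colorDist C u v) := by
  have : Nontrivial V := ⟨u, v, huv⟩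
  have hdeg (x : V) : 0 < G.degree x := hG.preconnected.degree_pos_of_nontrivial x
  have hdeg_le (x : V) := degree_le_card_sub_partSize C x
  rw [degreePow_mul_degreePow, rpow_mul_rpow_eq_iff_of_nonneg_of_nonpos
    (mul_pos (Nat.cast_pos.2 (hdeg u)) (Nat.cast_pos.2 (hdeg v))) (degree_mul_degree_le C u v)
    (Nat.cast_pos.2 (colorDist_pos C u v)) (Nat.cast_le.2 (colorDist_le_dist C hG huv)) ha hb,
    Nat.cast_inj, ← Nat.cast_mul, ← Nat.cast_mul, Nat.cast_inj,
    mul_eq_mul_iff_eq_and_eq_of_pos (hdeg_le u) (hdeg_le v) (hdeg u)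
      ((hdeg v).trans_le (hdeg_le v))]

variable [Fintype ι]

theorem two_mul_gut_le (C : G.Coloring ι) (hG : G.Connected) (ha : 0 ≤ a) (hb : b ≤ 0) :
    2 * gut G a b ≤ multipartiteSum (degreePow (Fintype.card V) a) (2 ^ b) (partSize C) := by
  rw [two_mul_gut_s9, ← sum_offDiag_mul_colorDist_rpow]
  exact Finset.sum_le_sum fun q hq =>
    rpow_degree_mul_rpow_dist_le C hG ha hb (Finset.mem_offDiag.1 hq).2.2

theorem two_mul_gut_eq_iff (C : G.Coloring ι) (hG : G.Connected) (ha : 0 ≤ a) (hb : b ≤ 0)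
    (hab : a ≠ 0 ∨ b ≠ 0) :
    2 * gut G a b = multipartiteSum (degreePow (Fintype.card V) a) (2 ^ b) (partSize C) ↔
      ∀ u v, C u ≠ C v → G.Adj u v := by
  rw [two_mul_gut_s9, ← sum_offDiag_mul_colorDist_rpow, Finset.sum_eq_sum_iff_of_le fun q hq =>
    rpow_degree_mul_rpow_dist_le C hG ha hb (Finset.mem_offDiag.1 hq).2.2]
  constructor
  · intro heq u v hC
    have huv : u ≠ v := ne_of_apply_ne C hC
    obtain ⟨hdeg, hdist⟩ :=
      (rpow_degree_mul_rpow_dist_eq_iff C hG ha hb huv).1 (heq (u, v) (by simpa using huv))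
    rcases hab with ha | hb
    · exact (degree_eq_card_sub_partSize_iff C).1 (hdeg.resolve_left ha).1 v hC
    · rw [← SimpleGraph.dist_eq_one_iff_adj, hdist.resolve_left hb, colorDist, if_neg hC]
  · intro hC q hq
    have huv := (Finset.mem_offDiag.1 hq).2.2
    have hdeg (x : V) := (degree_eq_card_sub_partSize_iff C).2 (hC x)
    exact (rpow_degree_mul_rpow_dist_eq_iff C hG ha hb huv).2
      ⟨.inr ⟨hdeg q.1, hdeg q.2⟩, .inr (dist_eq_colorDist C hG hC huv)⟩

end Coloring

section CompleteMultipartite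

open SimpleGraph

variable {V ι : Type*} [Fintype V] {G : SimpleGraph V} {p : ι → ℕ}

lemma IsBalanced.connected_completeMultipartiteGraph [Nontrivial ι] [Nonempty (Σ i, Fin (p i))]
    (hp : IsBalanced p) : (completeMultipartiteGraph fun i => Fin (p i)).Connected := by
  refine (connected_iff _).2 ⟨fun ⟨i, u⟩ ⟨j, v⟩ => ?_, inferInstance⟩
  rcases ne_or_eq i j with hij | rfl
  · exact Adj.reachable hij
  rcases eq_or_ne u v with rfl | huv
  · rfl
  have htwo : 1 < p i := Fin.nontrivial_iff_two_le.1 ⟨u, v, huv⟩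
  obtain ⟨j, hji⟩ := exists_ne i
  have hpos : 0 < p j := Nat.lt_of_succ_lt_succ (htwo.trans_le (hp i j))
  let x : Σ i, Fin (p i) := ⟨j, 0, hpos⟩
  have adj_x (w : Fin (p i)) : (completeMultipartiteGraph fun i => Fin (p i)).Adj ⟨i, w⟩ x :=
    hji.symm
  exact (adj_x u).reachable.trans (adj_x v).symm.reachable

lemma partSize_fst_comp_equiv (e : V ≃ Σ i, Fin (p i)) : partSize (fun v => (e v).1) = p := by
  funext i
  rw [partSize, ← Fintype.card_fin (p i)]
  exact Fintype.card_congr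
    ((e.subtypeEquiv (q := fun s => s.1 = i) fun _ => Iff.rfl).trans (Equiv.sigmaSubtype i))

lemma nonempty_iso_completeMultipartiteGraph_s9 (C : G.Coloring ι)
    (hC : ∀ u v, C u ≠ C v → G.Adj u v) (σ : Equiv.Perm ι) (hsize : partSize C = p ∘ σ) :
    Nonempty (G ≃g completeMultipartiteGraph fun i => Fin (p i)) := by
  have e (i : ι) : {v // C v = i} ≃ Fin (p (σ i)) :=
    Fintype.equivFinOfCardEq (congrFun hsize i)
  refine ⟨⟨(Equiv.sigmaFiberEquiv C).symm.trans (Equiv.sigmaCongr σ e), fun {u v} => ?_⟩⟩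
  have hadj : G.Adj u v ↔ C u ≠ C v := ⟨C.valid, hC u v⟩
  simp [hadj, Equiv.sigmaFiberEquiv, Equiv.sigmaCongr]

lemma two_mul_gut_of_iso [Fintype ι] (hG : G.Connected)
    (φ : G ≃g completeMultipartiteGraph fun i => Fin (p i)) {a b : ℝ} (ha : 0 ≤ a) (hb : b ≤ 0)
    (hab : a ≠ 0 ∨ b ≠ 0) :
    2 * gut G a b = multipartiteSum (degreePow (Fintype.card V) a) (2 ^ b) p := by
  let C : G.Coloring ι := (completeMultipartiteGraph.coloring fun i => Fin (p i)).comp φ.toHom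
  have hsize : partSize C = p := partSize_fst_comp_equiv φ.toEquiv
  rw [← hsize, two_mul_gut_eq_iff C hG ha hb hab]
  exact fun _ _ h => φ.map_adj_iff.1 h

theorem stmt9_general [Fintype ι] [Nontrivial ι] (G : SimpleGraph V) (hG : G.Connected)
    (hcol : Nonempty (G.Coloring ι)) {a b : ℝ} (ha0 : 0 ≤ a) (ha1 : a ≤ 1) (hb : b ≤ 0)
    (hab : a ≠ 0 ∨ b ≠ 0) (p : ι → ℕ) (hsum : ∑ i, p i = Fintype.card V) (hp : IsBalanced p) :
    gut G a b ≤ gut (completeMultipartiteGraph fun i => Fin (p i)) a b ∧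
    (gut G a b = gut (completeMultipartiteGraph fun i => Fin (p i)) a b ↔
      Nonempty (G ≃g completeMultipartiteGraph fun i => Fin (p i))) := by
  have hcard : Fintype.card (Σ i, Fin (p i)) = Fintype.card V := by simp [hsum]
  have : Nonempty (Σ i, Fin (p i)) :=
    have := hG.nonempty
    Fintype.card_pos_iff.1 (hcard ▸ Fintype.card_pos)
  have hbetter (y : ι → ℕ) (i j : ι) (hy : ∑ l, y l = ∑ l, p l) (hij : y j + 2 ≤ y i) :=
    multipartiteSum_degreePow_lt_transfer (β := 2 ^ b) ha0 ha1 (by positivity)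
      (Real.rpow_le_one_of_one_le_of_nonpos one_le_two hb)
      (hab.imp_right fun hb0 =>
        (Real.rpow_lt_one_of_one_lt_of_neg one_lt_two (hb.lt_of_ne hb0)).ne) (hy.trans hsum) hij
  have hperm := multipartiteSum_comp_perm (ι := ι) (degreePow (Fintype.card V) a) (2 ^ b)
  obtain ⟨C⟩ := hcol
  have hsize : ∑ i, partSize C i = ∑ i, p i := (sum_partSize C).trans hsum.symm
  have hG_le := two_mul_gut_le C hG ha0 hb
  have hC_le := hp.apply_le_of_sum_eq hperm hbetter hsize
  have hK := two_mul_gut_of_iso hp.connected_completeMultipartiteGraph Iso.refl ha0 hb hab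
  rw [hcard] at hK
  refine ⟨by linarith, fun heq => ?_, fun ⟨φ⟩ => ?_⟩
  · obtain ⟨σ, hσ⟩ := hp.exists_perm_of_apply_eq hperm hbetter hsize (by linarith)
    exact nonempty_iso_completeMultipartiteGraph_s9 C
      ((two_mul_gut_eq_iff C hG ha0 hb hab).1 (by linarith)) σ hσ
  · linarith [two_mul_gut_of_iso hG φ ha0 hb hab]

end CompleteMultipartite

theorem stmt9 {V : Type*} [Fintype V] (G : SimpleGraph V) (n : ℕ)
    (hn : n = Fintype.card V) (hG : G.Connected)
    (a b : ℝ) (ha : 0 ≤ a) (ha2 : a < 1 / 2) (hb : b ≤ 0) (hab : a ≠ 0 ∨ b ≠ 0)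
    (k : ℕ) (hk2 : 2 ≤ k) (hkn : k ≤ n) (hkpart : G.Colorable k)
    (p : Fin k → ℕ) (hsum : ∑ i, p i = n)
    (hbal : ∀ i j, |(p i : ℤ) - (p j : ℤ)| ≤ 1) :
    gut G a b ≤ gut (SimpleGraph.completeMultipartiteGraph (fun i => Fin (p i))) a b ∧
    (gut G a b = gut (SimpleGraph.completeMultipartiteGraph (fun i => Fin (p i))) a b ↔
      Nonempty (G ≃g SimpleGraph.completeMultipartiteGraph (fun i => Fin (p i)))) := by
  subst hn
  have : Nontrivial (Fin k) := Fin.nontrivial_iff_two_le.2 hk2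
  have hp : IsBalanced p := fun i j => by have := abs_le.1 (hbal i j); lia
  exact stmt9_general G hG hkpart ha (by linarith) hb hab p hsum hp
end

section
/- Let n ≥ 2 and m be positive integers with m ≥ n(n−1)/4, and suppose there exists a simple graph with n vertices and m edges. Let f(n,m) = max{ Σ_{u∈V(G)} d(u)^2 : G a simple graph with n vertices and m edges }. Then m·√(8m+1) − 3m ≤ f(n,m) ≤ m·√(8m+1) − m. -/
open scoped Classical

/-- `fmax n m` is the maximum of `Σ_{u ∈ V(G)} d(u)²` over all simple graphs `G`
with `n` vertices and `m` edges. -/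
noncomputable def fmax (n m : ℕ) : ℕ :=
  sSup {k : ℕ | ∃ G : SimpleGraph (Fin n),
    G.edgeFinset.card = m ∧ ∑ v, G.degree v ^ 2 = k}

/-!
Write `k = cliqueOrder m`, so that `k (k - 1) = 2m` and the bounds are `2m (k - 2)` and
`2m (k - 1)`.

For the upper bound, moving an edge `vw` to `uw` with `u` of maximum degree increases
`∑ d(v) ^ 2`, so a maximiser has an isolated or a universal vertex. Induct on the number of
vertices for graphs containing at least half of all pairs. An isolated vertex can be deleted. If a
universal vertex `w` is deleted from `G`, then either `G - w` or its complement again contains at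
least half of all pairs. In the first case the bound passes back through the addition of a universal
vertex; in the second it holds for `Gᶜ`, where `w` is isolated, and passes to `G` because `G` has at
least as many edges as `Gᶜ`.

For the lower bound, put all edges on `⌈k⌉ < k + 1` vertices and apply Cauchy–Schwarz to the
degrees.
-/

section CliqueOrder

/-- The order of a complete graph with `m` edges, extended to real `m`: the root `k ≥ 1` of
`k * (k - 1) = 2 * m`. -/
noncomputable def cliqueOrder (m : ℝ) : ℝ := (1 + √(8 * m + 1)) / 2

/-- The sum of the squared degrees of a complete graph with `m` edges, extended to real `m`. With
`k = cliqueOrder m` it is `k * (k - 1) ^ 2`, written here with `k * (k - 1) = 2 * m`. -/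
noncomputable def cliqueDegreeSqSum (m : ℝ) : ℝ := 2 * m * (cliqueOrder m - 1)

variable {m m' n p x : ℝ}

theorem one_le_cliqueOrder (hm : 0 ≤ m) : 1 ≤ cliqueOrder m := by
  have : 1 ≤ √(8 * m + 1) := Real.one_le_sqrt.2 (by linarith)
  unfold cliqueOrder
  linarith

theorem cliqueOrder_mul_sub_one (hm : 0 ≤ m) :
    cliqueOrder m * (cliqueOrder m - 1) = 2 * m := by
  have : √(8 * m + 1) ^ 2 = 8 * m + 1 := Real.sq_sqrt (by linarith)
  unfold cliqueOrder
  linarith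

theorem cliqueOrder_le_iff (hx : 1 ≤ x) : cliqueOrder m ≤ x ↔ 2 * m ≤ x * (x - 1) := by
  rw [cliqueOrder, div_le_iff₀ two_pos, ← le_sub_iff_add_le', Real.sqrt_le_left (by linarith)]
  constructor <;> intro h <;> linarith

theorem cliqueOrder_mono : Monotone cliqueOrder := fun a b hab ↦ by
  unfold cliqueOrder
  gcongr

theorem cliqueDegreeSqSum_eq (m : ℝ) : cliqueDegreeSqSum m = m * √(8 * m + 1) - m := by
  unfold cliqueDegreeSqSum cliqueOrder
  ring

-- The left side is the value of `∑ d ^ 2` for a graph on `n` vertices with `m` edges whose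
-- complement has `∑ d ^ 2 = cliqueDegreeSqSum m'`.
theorem cliqueDegreeSqSum_compl_le (hm' : 0 ≤ m') (hle : m' ≤ m) (hn : 1 ≤ n)
    (h : 2 * (m + m') = n * (n - 1)) :
    cliqueDegreeSqSum m' + 4 * m * (n - 1) - n * (n - 1) ^ 2 ≤ cliqueDegreeSqSum m := by
  have hxn : cliqueOrder m ≤ n := (cliqueOrder_le_iff hn).2 (by linarith)
  have hyx : cliqueOrder m' ≤ cliqueOrder m := cliqueOrder_mono hle
  have hx := cliqueOrder_mul_sub_one (hm'.trans hle)
  have hy := cliqueOrder_mul_sub_one hm'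
  unfold cliqueDegreeSqSum
  generalize cliqueOrder m = x at *
  generalize cliqueOrder m' = y at *
  have hprod : 0 ≤ (x - y) * (n - x) * (n - y) :=
    mul_nonneg (mul_nonneg (by linarith) (by linarith)) (by linarith)
  have hxy : x * (x - 1) + y * (y - 1) = n * (n - 1) := by linarith
  have hdiff : 2 * m * (x - 1) - (2 * m' * (y - 1) + 4 * m * (n - 1) - n * (n - 1) ^ 2) =
      (x - y) * (n - x) * (n - y) := by
    linear_combination
      -(x - 1 - 2 * (n - 1)) * hx + (y - 1) * hy - (n - 1 - (x - y)) * hxy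
  linarith

-- Joining a new vertex to all vertices of a graph with `p` vertices and `m` edges adds
-- `4 * m + p * (p + 1)` to `∑ d ^ 2`.
theorem cliqueDegreeSqSum_cone_le (hp : 1 ≤ p) (hlow : p * (p - 1) ≤ 4 * m)
    (hup : 2 * m ≤ p * (p - 1)) :
    cliqueDegreeSqSum m + 4 * m + p * (p + 1) ≤ cliqueDegreeSqSum (m + p) := by
  have hm : 0 ≤ m := by nlinarith
  have hyp : cliqueOrder m ≤ p := (cliqueOrder_le_iff hp).2 hup
  have hy1 := one_le_cliqueOrder hm
  have hx1 := one_le_cliqueOrder (show 0 ≤ m + p by linarith)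
  have hy := cliqueOrder_mul_sub_one hm
  have hx := cliqueOrder_mul_sub_one (show 0 ≤ m + p by linarith)
  unfold cliqueDegreeSqSum
  generalize cliqueOrder (m + p) = x at *
  generalize cliqueOrder m = y at *
  have hp2 : (x - y) * (x + y - 1) = 2 * p := by linarith
  have hge : p + 1 ≤ x + y := by
    have : (p + 1) * p ≤ (x + y) * (x + y - 1) := by nlinarith
    by_contra! hc
    nlinarith
  have hd1 : 1 ≤ x - y := by
    by_contra! hc
    nlinarith
  have hd2 : x - y ≤ 2 := by
    by_contra! hc
    nlinarith
  have hprod : 0 ≤ (x - y - 1) * (2 - (x - y)) * ((x + y - 1) ^ 2 - (x - y + 1)) :=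
    mul_nonneg (mul_nonneg (by linarith) (by linarith)) (by nlinarith)
  have hdiff : 2 * (m + p) * (x - 1) - (2 * m * (y - 1) + 4 * m + p * (p + 1)) =
      (x - y - 1) * (2 - (x - y)) * ((x + y - 1) ^ 2 - (x - y + 1)) / 4 := by
    obtain rfl : m = y * (y - 1) / 2 := by linarith
    obtain rfl : p = (x - y) * (x + y - 1) / 2 := by linarith
    ring
  linarith

theorem mul_cliqueDegreeSqSum_sub_le (hm : 0 ≤ m) (hp : 0 ≤ p)
    (hpm : p ≤ cliqueOrder m + 1) : p * (cliqueDegreeSqSum m - 2 * m) ≤ (2 * m) ^ 2 := by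
  have hk := cliqueOrder_mul_sub_one hm
  have hle : p * (cliqueOrder m - 2) ≤ 2 * m := by
    obtain h | h := le_total (cliqueOrder m) 2
    · nlinarith
    · nlinarith
  calc p * (cliqueDegreeSqSum m - 2 * m) = 2 * m * (p * (cliqueOrder m - 2)) := by
        unfold cliqueDegreeSqSum
        ring
    _ ≤ 2 * m * (2 * m) := by gcongr
    _ = (2 * m) ^ 2 := by ring

end CliqueOrder

section DegreeSquares

open Finset SimpleGraph

variable {V : Type*} [Fintype V]

theorem sum_eq_add_sum_compl_singleton {M : Type*} [AddCommMonoid M] [DecidableEq V]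
    (f : V → M) (w : V) : ∑ v, f v = f w + ∑ v : ({w}ᶜ : Set V), f v := by
  convert Fintype.sum_eq_add_sum_subtype_ne f w <;> simp

variable (G : SimpleGraph V) [DecidableRel G.Adj] {u v w : V}

theorem degree_sup_edge [DecidableRel (G ⊔ edge u v).Adj] (hne : u ≠ v) (hadj : ¬G.Adj u v)
    (x : V) :
    (G ⊔ edge u v).degree x =
      G.degree x + ((if x = u then 1 else 0) + if x = v then 1 else 0) := by
  have hadd (y : V) : (if (G ⊔ edge u v).Adj x y then 1 else 0) =
      (if G.Adj x y then 1 else 0) +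
        ((if x = u ∧ y = v then 1 else 0) + if x = v ∧ y = u then 1 else 0) := by
    have := G.adj_symm (u := v) (v := u)
    simp only [sup_adj, edge_adj]
    grind
  have hdeg (H : SimpleGraph V) [DecidableRel H.Adj] := H.degree_eq_sum_if_adj (R := ℕ) x
  simp only [Nat.cast_id] at hdeg
  simp only [hdeg, hadd, sum_add_distrib, ite_and]
  simp

theorem sum_degree_sq_sup_edge [DecidableRel (G ⊔ edge u v).Adj] (hne : u ≠ v)
    (hadj : ¬G.Adj u v) :
    ∑ x, (G ⊔ edge u v).degree x ^ 2 =
      ∑ x, G.degree x ^ 2 + 2 * (G.degree u + G.degree v + 1) := by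
  have hsq (x : V) : (G ⊔ edge u v).degree x ^ 2 = G.degree x ^ 2 +
      ((if x = u then 2 * G.degree x + 1 else 0) + if x = v then 2 * G.degree x + 1 else 0) := by
    rw [degree_sup_edge G hne hadj]
    grind
  simp only [hsq, sum_add_distrib, sum_ite_eq', mem_univ, if_true]
  ring

variable {G}

-- Replacing an edge `vw` by `uw` with `u` of maximum degree increases the sum.
theorem exists_sum_degree_sq_lt [Nonempty V] (hiso : ∀ v, ¬G.IsIsolated v)
    (huniv : ∀ v, ¬G.IsUniversal v) :
    ∃ (H : SimpleGraph V) (_ : DecidableRel H.Adj), #H.edgeFinset = #G.edgeFinset ∧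
      ∑ v, G.degree v ^ 2 < ∑ v, H.degree v ^ 2 := by
  obtain ⟨u, hu⟩ := Finite.exists_max (G.degree ·)
  obtain ⟨w, huw, hnadj⟩ : ∃ w, u ≠ w ∧ ¬G.Adj u w := by
    simpa [IsUniversal] using huniv u
  obtain ⟨v, hwv⟩ := exists_adj_iff_not_isIsolated.2 (hiso w)
  obtain ⟨K, hKv, hKu, rfl⟩ : ∃ K, ¬K.Adj v w ∧ ¬K.Adj u w ∧ G = K ⊔ edge v w :=
    ⟨G \ edge v w, by simp [edge_adj, hwv.ne'], fun h ↦ hnadj h.1,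
      (sdiff_sup_cancel (G.edge_le_iff.2 (.inr hwv.symm))).symm⟩
  have hlt : K.degree v < K.degree u := by
    have := hu v
    simp only [degree_sup_edge K hwv.ne' hKv] at this
    grind
  refine ⟨K ⊔ edge u w, inferInstance, ?_, ?_⟩
  · convert (K.card_edgeFinset_sup_edge hKu huw).trans
      (K.card_edgeFinset_sup_edge hKv hwv.ne').symm
  · rw [sum_degree_sq_sup_edge K huw hKu, sum_degree_sq_sup_edge K hwv.ne' hKv]
    lia

theorem exists_isIsolated_or_isUniversal_sum_degree_sq_le [Nonempty V] :
    ∃ H : SimpleGraph V, #H.edgeFinset = #G.edgeFinset ∧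
      ((∃ v, H.IsIsolated v) ∨ ∃ v, H.IsUniversal v) ∧
      ∑ v, G.degree v ^ 2 ≤ ∑ v, H.degree v ^ 2 := by
  let G' : {H : SimpleGraph V // #H.edgeFinset = #G.edgeFinset} := ⟨G, by congr!⟩
  have : Nonempty {H : SimpleGraph V // #H.edgeFinset = #G.edgeFinset} := ⟨G'⟩
  obtain ⟨⟨H, hH⟩, hmax⟩ := Finite.exists_max fun
    H : {H : SimpleGraph V // #H.edgeFinset = #G.edgeFinset} ↦ ∑ v, H.1.degree v ^ 2
  refine ⟨H, hH, ?_, (sum_congr rfl fun v _ ↦ by congr!).trans_le (hmax G')⟩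
  by_contra! hno
  obtain ⟨K, _, hK, hlt⟩ := exists_sum_degree_sq_lt hno.1 hno.2
  exact hlt.not_ge (by convert hmax ⟨K, by convert hK.trans hH⟩)

section RemoveVertex

variable [DecidableEq V]

theorem card_compl_singleton_add_one (w : V) :
    Fintype.card ({w}ᶜ : Set V) + 1 = Fintype.card V := by
  rw [Fintype.card_compl_set, Fintype.card_unique (α := ({w} : Set V)),
    Nat.sub_add_cancel (Fintype.card_pos_iff.2 ⟨w⟩)]

theorem degree_eq_degree_induce_compl_singleton_add (v : ({w}ᶜ : Set V)) :
    G.degree v = (G.induce {w}ᶜ).degree v + if G.Adj w v then 1 else 0 := by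
  have hdeg {W : Type _} [Fintype W] (H : SimpleGraph W) [DecidableRel H.Adj] (x : W) :=
    H.degree_eq_sum_if_adj (R := ℕ) x
  simp only [Nat.cast_id] at hdeg
  rw [hdeg, hdeg, sum_eq_add_sum_compl_singleton _ w, add_comm]
  simp [G.adj_comm w]

theorem card_edgeFinset_induce_of_isIsolated (hw : G.IsIsolated w) :
    #(G.induce {w}ᶜ).edgeFinset = #G.edgeFinset := by
  refine card_edgeFinset_induce_of_support_subset fun v hv ↦ ?_
  rintro rfl
  exact G.mem_support_iff_not_isIsolated.1 hv hw

theorem sum_degree_sq_induce_of_isIsolated (hw : G.IsIsolated w) :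
    ∑ v, (G.induce {w}ᶜ).degree v ^ 2 = ∑ v, G.degree v ^ 2 := by
  rw [sum_eq_add_sum_compl_singleton _ w, (G.degree_eq_zero w).2 hw]
  simp [degree_eq_degree_induce_compl_singleton_add, hw _]

theorem card_edgeFinset_of_isUniversal (hw : G.IsUniversal w) :
    #G.edgeFinset = #(G.induce {w}ᶜ).edgeFinset + Fintype.card ({w}ᶜ : Set V) := by
  rw [card_edgeFinset_induce_compl_singleton, card_edgeFinset_deleteIncidenceSet,
    Nat.eq_sub_of_add_eq (card_compl_singleton_add_one w), ← (degree_eq_card_sub_one G w).2 hw,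
    Nat.sub_add_cancel (G.degree_le_card_edgeFinset w)]

theorem sum_degree_sq_of_isUniversal (hw : G.IsUniversal w) :
    ∑ v, G.degree v ^ 2 = ∑ v, (G.induce {w}ᶜ).degree v ^ 2 + 4 * #(G.induce {w}ᶜ).edgeFinset +
      Fintype.card ({w}ᶜ : Set V) * (Fintype.card ({w}ᶜ : Set V) + 1) := by
  have hdeg (v : ({w}ᶜ : Set V)) : G.degree v = (G.induce {w}ᶜ).degree v + 1 := by
    rw [degree_eq_degree_induce_compl_singleton_add, if_pos (hw (Ne.symm v.2))]
  have hdegw : G.degree w = Fintype.card ({w}ᶜ : Set V) := by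
    rw [(degree_eq_card_sub_one G w).2 hw, ← card_compl_singleton_add_one w,
      Nat.add_sub_cancel]
  rw [sum_eq_add_sum_compl_singleton _ w, hdegw]
  simp only [hdeg, add_sq, sum_add_distrib, ← mul_sum, ← sum_mul,
    (G.induce {w}ᶜ).sum_degrees_eq_twice_card_edges, sum_const, card_univ, smul_eq_mul]
  ring

end RemoveVertex

section Complement

variable (G) [DecidableEq V]

theorem card_edgeFinset_add_card_edgeFinset_compl :
    #G.edgeFinset + #Gᶜ.edgeFinset = (Fintype.card V).choose 2 := by
  rw [← card_edgeFinset_top_eq_card_choose_two,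
    ← card_union_of_disjoint (disjoint_edgeFinset.2 disjoint_compl_right)]
  congr 1
  rw [← coe_inj, coe_union, coe_edgeFinset, coe_edgeFinset, coe_edgeFinset, ← edgeSet_sup,
    sup_compl_eq_top]

theorem sum_degree_sq_compl :
    (∑ v, G.degree v ^ 2 : ℝ) = ∑ v, (Gᶜ.degree v : ℝ) ^ 2 +
      4 * #G.edgeFinset * (Fintype.card V - 1) -
      Fintype.card V * (Fintype.card V - 1 : ℝ) ^ 2 := by
  have hdeg (v : V) : (Gᶜ.degree v : ℝ) = Fintype.card V - 1 - G.degree v := by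
    have := G.degree_lt_card_verts v
    rw [G.degree_compl, Nat.sub_sub, Nat.cast_sub (by lia)]
    push_cast
    ring
  have hsum : (∑ v, G.degree v : ℝ) = 2 * #G.edgeFinset := by
    exact_mod_cast G.sum_degrees_eq_twice_card_edges
  simp only [hdeg, sub_sq _ (G.degree _ : ℝ), sum_add_distrib, sum_sub_distrib, ← mul_sum, hsum,
    sum_const, card_univ, nsmul_eq_mul]
  ring

end Complement

section UpperBound

variable [DecidableEq V]

theorem sum_degree_sq_le_of_compl [Nonempty V] (hle : #Gᶜ.edgeFinset ≤ #G.edgeFinset)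
    (hcompl : ((∑ v, Gᶜ.degree v ^ 2 : ℕ) : ℝ) ≤ cliqueDegreeSqSum #Gᶜ.edgeFinset) :
    ((∑ v, G.degree v ^ 2 : ℕ) : ℝ) ≤ cliqueDegreeSqSum #G.edgeFinset := by
  have hsum : (#G.edgeFinset + #Gᶜ.edgeFinset : ℝ) = (Fintype.card V).choose 2 := by
    exact_mod_cast card_edgeFinset_add_card_edgeFinset_compl G
  rw [Nat.cast_choose_two] at hsum
  have hbound := cliqueDegreeSqSum_compl_le (n := Fintype.card V) (Nat.cast_nonneg #Gᶜ.edgeFinset)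
    (Nat.cast_le.2 hle) (Nat.one_le_cast.2 Fintype.card_pos) (by linarith)
  have hsq := sum_degree_sq_compl G
  push_cast at hcompl ⊢
  linarith

theorem sum_degree_sq_le_of_isUniversal [Nontrivial V] (hw : G.IsUniversal w)
    (hdense : (Fintype.card ({w}ᶜ : Set V)).choose 2 ≤ 2 * #(G.induce {w}ᶜ).edgeFinset)
    (hdel : ((∑ v, (G.induce {w}ᶜ).degree v ^ 2 : ℕ) : ℝ) ≤
      cliqueDegreeSqSum #(G.induce {w}ᶜ).edgeFinset) :
    ((∑ v, G.degree v ^ 2 : ℕ) : ℝ) ≤ cliqueDegreeSqSum #G.edgeFinset := by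
  have hpos : 1 ≤ Fintype.card ({w}ᶜ : Set V) := by
    have := Fintype.one_lt_card (α := V)
    have := card_compl_singleton_add_one w
    lia
  have hup : (#(G.induce {w}ᶜ).edgeFinset : ℝ) ≤ (Fintype.card ({w}ᶜ : Set V)).choose 2 :=
    Nat.cast_le.2 card_edgeFinset_le_card_choose_two
  have hlow : ((Fintype.card ({w}ᶜ : Set V)).choose 2 : ℝ) ≤
      2 * #(G.induce {w}ᶜ).edgeFinset := by
    exact_mod_cast hdense
  rw [Nat.cast_choose_two] at hup hlow
  have hbound := cliqueDegreeSqSum_cone_le (Nat.one_le_cast.2 hpos) (by linarith)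
    (show 2 * (#(G.induce {w}ᶜ).edgeFinset : ℝ) ≤ _ by linarith)
  rw [sum_degree_sq_of_isUniversal hw, card_edgeFinset_of_isUniversal hw]
  push_cast at hdel ⊢
  linarith

theorem sum_degree_sq_le_of_choose_two_le {V : Type*} [Fintype V] (G : SimpleGraph V)
    [DecidableRel G.Adj] (hdense : (Fintype.card V).choose 2 ≤ 2 * #G.edgeFinset) :
    ((∑ v, G.degree v ^ 2 : ℕ) : ℝ) ≤ cliqueDegreeSqSum #G.edgeFinset := by
  obtain _ | _ := isEmpty_or_nonempty V
  · simp [cliqueDegreeSqSum, show #G.edgeFinset = 0 by simp [Subsingleton.elim G ⊥]]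
  obtain ⟨H, hcard, hH, hle⟩ :=
    exists_isIsolated_or_isUniversal_sum_degree_sq_le (G := G)
  rw [← hcard] at hdense ⊢
  refine le_trans (Nat.cast_le.2 hle) ?_
  have hlt (w : V) : Fintype.card ({w}ᶜ : Set V) < Fintype.card V :=
    (card_compl_singleton_add_one w).le
  by_cases! hiso : ∃ w, H.IsIsolated w
  · obtain ⟨w, hw⟩ := hiso
    have hsum := sum_degree_sq_induce_of_isIsolated hw
    have hedge := card_edgeFinset_induce_of_isIsolated hw
    have ih := sum_degree_sq_le_of_choose_two_le (H.induce {w}ᶜ)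
      (((Nat.choose_le_choose 2 (hlt w).le).trans hdense).trans_eq (by rw [hedge]))
    rw [hedge] at ih
    exact hsum ▸ ih
  · obtain ⟨w, hw⟩ := hH.resolve_left (by simpa using hiso)
    have := nontrivial_of_not_isIsolated (hiso w)
    by_cases hdel : (Fintype.card ({w}ᶜ : Set V)).choose 2 ≤ 2 * #(H.induce {w}ᶜ).edgeFinset
    · exact sum_degree_sq_le_of_isUniversal hw hdel
        (sum_degree_sq_le_of_choose_two_le (H.induce {w}ᶜ) hdel)
    have hw' : Hᶜ.IsIsolated w := isIsolated_compl_iff_isUniversal.2 hw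
    have hsum := sum_degree_sq_induce_of_isIsolated hw'
    have hedge := card_edgeFinset_induce_of_isIsolated hw'
    have htotal := card_edgeFinset_add_card_edgeFinset_compl H
    have hdegw := card_edgeFinset_of_isUniversal hw
    have hchoose : (Fintype.card V).choose 2 = (Fintype.card ({w}ᶜ : Set V)).choose 2 +
        Fintype.card ({w}ᶜ : Set V) := by
      rw [← card_compl_singleton_add_one w, Nat.choose_succ_succ, Nat.choose_one_right, add_comm]
    have ih := sum_degree_sq_le_of_choose_two_le (Hᶜ.induce {w}ᶜ) (by lia)
    rw [hsum, hedge] at ih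
    exact sum_degree_sq_le_of_compl (by lia) ih
termination_by Fintype.card V
decreasing_by all_goals exact hlt w

end UpperBound

section LowerBound

theorem exists_le_card_edgeFinset_eq {m : ℕ} (hm : m ≤ #G.edgeFinset) :
    ∃ H ≤ G, #H.edgeFinset = m := by
  obtain ⟨s, hs, rfl⟩ := exists_subset_card_eq hm
  have hs' : (s : Set (Sym2 V)) ⊆ G.edgeSet := by simpa using coe_subset.2 hs
  have hedge : (fromEdgeSet (s : Set (Sym2 V))).edgeSet = s := by
    rw [edgeSet_fromEdgeSet, sdiff_eq_left]
    exact Set.disjoint_left.2 fun e he ↦ G.not_isDiag_of_mem_edgeSet (hs' he)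
  refine ⟨fromEdgeSet s, ?_, ?_⟩
  · rwa [← edgeSet_subset_edgeSet, hedge]
  · refine congr_arg card (coe_inj.1 ?_)
    rw [coe_edgeFinset, hedge]

theorem exists_support_subset_card_edgeFinset_eq (s : Finset V) {m : ℕ}
    (hm : m ≤ (#s).choose 2) :
    ∃ G : SimpleGraph V, G.support ⊆ s ∧ #G.edgeFinset = m := by
  let K : SimpleGraph V := (⊤ : SimpleGraph s).map (Function.Embedding.subtype (· ∈ s))
  have hcard : #K.edgeFinset = (#s).choose 2 := by
    rw [card_edgeFinset_map, card_edgeFinset_top_eq_card_choose_two, Fintype.card_coe]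
  obtain ⟨G, hle, hG⟩ := exists_le_card_edgeFinset_eq (hm.trans_eq hcard.symm)
  refine ⟨G, (support_mono hle).trans ?_, hG⟩
  rintro v ⟨u, -, a, b, -, rfl, -⟩
  exact a.2

theorem sq_two_mul_card_edgeFinset_le_of_support_subset {s : Finset V} (hs : G.support ⊆ s) :
    (2 * #G.edgeFinset) ^ 2 ≤ #s * ∑ v, G.degree v ^ 2 := by
  have hzero (v : V) (_ : v ∈ univ) (hv : v ∉ s) : G.degree v = 0 :=
    (G.degree_eq_zero v).2 (G.notMem_support_iff_isIsolated.1 fun h ↦ hv (hs h))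
  calc (2 * #G.edgeFinset) ^ 2 = (∑ v ∈ s, G.degree v) ^ 2 := by
        rw [← G.sum_degrees_eq_twice_card_edges, sum_subset (subset_univ s) hzero]
    _ ≤ #s * ∑ v ∈ s, G.degree v ^ 2 := sq_sum_le_card_mul_sum_sq
    _ ≤ #s * ∑ v, G.degree v ^ 2 := by gcongr; exact subset_univ s

theorem exists_cliqueDegreeSqSum_sub_le [Nonempty V] {m : ℕ}
    (hm : m ≤ (Fintype.card V).choose 2) :
    ∃ G : SimpleGraph V, #G.edgeFinset = m ∧
      cliqueDegreeSqSum m - 2 * m ≤ ((∑ v, G.degree v ^ 2 : ℕ) : ℝ) := by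
  have hm0 : (0 : ℝ) ≤ m := m.cast_nonneg
  have hk1 := one_le_cliqueOrder hm0
  have hp1 : (1 : ℝ) ≤ ⌈cliqueOrder m⌉₊ := hk1.trans (Nat.le_ceil _)
  have hpV : ⌈cliqueOrder m⌉₊ ≤ Fintype.card V := by
    have : (m : ℝ) ≤ (Fintype.card V).choose 2 := Nat.cast_le.2 hm
    rw [Nat.cast_choose_two] at this
    exact Nat.ceil_le.2 <|
      (cliqueOrder_le_iff (Nat.one_le_cast.2 Fintype.card_pos)).2 (by linarith)
  have hmp : m ≤ (⌈cliqueOrder m⌉₊).choose 2 := by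
    have := (cliqueOrder_le_iff hp1).1 (Nat.le_ceil _)
    rw [← Nat.cast_le (α := ℝ), Nat.cast_choose_two]
    linarith
  obtain ⟨s, -, hs⟩ := exists_subset_card_eq (s := (univ : Finset V)) hpV
  obtain ⟨G, hGs, hG⟩ := exists_support_subset_card_edgeFinset_eq s (hmp.trans_eq (by rw [hs]))
  refine ⟨G, hG, le_of_mul_le_mul_left ?_ (one_pos.trans_le hp1)⟩
  calc _ ≤ (2 * (m : ℝ)) ^ 2 :=
        mul_cliqueDegreeSqSum_sub_le hm0 (by linarith) (Nat.ceil_lt_add_one (by linarith)).le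
    _ ≤ _ := by
        have := sq_two_mul_card_edgeFinset_le_of_support_subset hGs
        rw [hG, hs] at this
        exact_mod_cast this

end LowerBound

end DegreeSquares

section Fmax

theorem finite_setOf_sum_degree_sq (n m : ℕ) :
    {k : ℕ | ∃ G : SimpleGraph (Fin n),
      G.edgeFinset.card = m ∧ ∑ v, G.degree v ^ 2 = k}.Finite :=
  (Set.finite_range fun G : SimpleGraph (Fin n) ↦ ∑ v, G.degree v ^ 2).subset <| by
    rintro _ ⟨G, -, rfl⟩
    exact ⟨G, rfl⟩

theorem sum_degree_sq_le_fmax {n : ℕ} (G : SimpleGraph (Fin n)) :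
    ∑ v, G.degree v ^ 2 ≤ fmax n G.edgeFinset.card :=
  le_csSup (finite_setOf_sum_degree_sq n _).bddAbove ⟨G, rfl, rfl⟩

theorem exists_sum_degree_sq_eq_fmax {n m : ℕ}
    (hex : ∃ G : SimpleGraph (Fin n), G.edgeFinset.card = m) :
    ∃ G : SimpleGraph (Fin n), G.edgeFinset.card = m ∧ ∑ v, G.degree v ^ 2 = fmax n m := by
  obtain ⟨G, hG⟩ := hex
  refine Nat.sSup_mem ?_ (finite_setOf_sum_degree_sq n m).bddAbove
  exact ⟨_, G, hG, rfl⟩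

end Fmax

theorem stmt19 (n m : ℕ) (hn : 2 ≤ n) (hm : 0 < m)
    (hmn : ((n : ℝ) * ((n : ℝ) - 1)) / 4 ≤ (m : ℝ))
    (hex : ∃ G : SimpleGraph (Fin n), G.edgeFinset.card = m) :
    (m : ℝ) * Real.sqrt (8 * (m : ℝ) + 1) - 3 * (m : ℝ) ≤ (fmax n m : ℝ) ∧
    (fmax n m : ℝ) ≤ (m : ℝ) * Real.sqrt (8 * (m : ℝ) + 1) - (m : ℝ) := by
  have hdense : n.choose 2 ≤ 2 * m := by
    rw [← Nat.cast_le (α := ℝ), Nat.cast_choose_two]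
    push_cast
    linarith
  obtain ⟨G, rfl, hG⟩ := exists_sum_degree_sq_eq_fmax hex
  have : NeZero n := ⟨by lia⟩
  obtain ⟨H, hH, hlower⟩ := exists_cliqueDegreeSqSum_sub_le (V := Fin n) (m := G.edgeFinset.card)
    G.card_edgeFinset_le_card_choose_two
  have hupper := sum_degree_sq_le_of_choose_two_le G (by rwa [Fintype.card_fin])
  have hmax : ((∑ v, H.degree v ^ 2 : ℕ) : ℝ) ≤ fmax n G.edgeFinset.card :=
    Nat.cast_le.2 (hH ▸ sum_degree_sq_le_fmax H)
  rw [hG] at hupper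
  rw [cliqueDegreeSqSum_eq] at hlower hupper
  constructor <;> linarith
end
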